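/- Fix m ∈ (−1,1) and ρ ∈ (0,1), and suppose Assumption 1 holds. Let ã ∈ (0,ς) and λ̃ > 0 be the solutions of G*(ã) = ρ(log 2 − log(1+|m|)) and G'(λ̃) = ã. Then there exists a sequence of measurable functions A_n : ℝ^ℕ → ℝ (depending only on h) such that for every bounded continuous nonnegative function f : ℝ → ℝ with compact support, E_h[ E_U[ exp( −Σ_{τ∈{−1,1}^n} f(H_n(h,τ) − A_n(h)) · 1{U_τ ≤ Q^{(nρ)}([τ])} ) ] ] → exp( −∫_ℝ (1 − e^{−f(x)}) e^{−λ̃ x} dx ) as n → ∞, where (U_τ)_{τ∈{−1,1}^n} are i.i.d. uniform random variables on [0,1] independent of h. (This is the convergence of the Laplace functionals of the thinned point process of energy levels H_n to those of a Poisson point process with intensity measure e^{−λ̃x}dx, i.e., REM universality.) -/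

import Mathlib

open MeasureTheory ProbabilityTheory Real Filter Set
open scoped ENNReal Topology BigOperators

noncomputable section

/-- Assumption 1 of the paper, phrased for the law `μ` of `h₁`. -/
structure Assumption1 (μ : Measure ℝ) : Prop where
  isProb : IsProbabilityMeasure μ
  acPart : ¬ μ.MutuallySingular (volume : Measure ℝ)
  smallBall : ∃ ε > (0:ℝ), ∃ p₁ > (0:ℝ), ∀ t ∈ Set.Ico (0:ℝ) ε,
    (μ {x : ℝ | |x| < t}).toReal ≤ p₁ * t
  densityLB : ∃ c d p₂ : ℝ, c < d ∧ 0 < p₂ ∧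
    ∀ s : Set ℝ, s ⊆ Set.Icc c d → MeasurableSet s →
      ENNReal.ofReal p₂ * volume s ≤ μ s
  intAbs : Integrable (fun x : ℝ => |x|) μ
  intSq : Integrable (fun x : ℝ => x ^ 2) μ
  intCube : Integrable (fun x : ℝ => |x| ^ 3) μ

/-- `g(λ) = log(((1+m)/2)e^{λ(1−m)} + ((1−m)/2)e^{−λ(1+m)})`. -/
def gfun (m lam : ℝ) : ℝ :=
  Real.log ((1 + m) / 2 * Real.exp (lam * (1 - m)) + (1 - m) / 2 * Real.exp (-(lam * (1 + m))))

/-- `G(λ) = E[g(λ h₁)]`. -/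
def Gf (μ : Measure ℝ) (m lam : ℝ) : ℝ := ∫ x, gfun m (lam * x) ∂μ

/-- `G*(a) = sup_{λ∈ℝ}(λa − G(λ))`. -/
def Gstar (μ : Measure ℝ) (m a : ℝ) : ℝ := ⨆ lam : ℝ, (lam * a - Gf μ m lam)

/-- `ς = −m ψ₁ + ψ₃`. -/
def sigmaBar (μ : Measure ℝ) (m : ℝ) : ℝ := -m * ∫ x, x ∂μ + ∫ x, |x| ∂μ

/-- The spin value attached to a Boolean: `true ↦ 1`, `false ↦ -1`. -/
def spin (b : Bool) : ℝ := if b then 1 else -1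

/-- `H_n(h,τ) = Σ_{i=1}^n h_i (τ_i − m)`. -/
def Hn (m : ℝ) (n : ℕ) (hs : ℕ → ℝ) (τ : Fin n → Bool) : ℝ :=
  ∑ i : Fin n, hs i * (spin (τ i) - m)

/-- `Q^{(nρ)}([τ]) = e^{nρ(log 2 − log(1+|m|))} ∏_{i=1}^n (1+mτ_i)/2`. -/
def Qw (m ρ : ℝ) (n : ℕ) (τ : Fin n → Bool) : ℝ :=
  Real.exp (n * ρ * (Real.log 2 - Real.log (1 + |m|))) * ∏ i : Fin n, (1 + m * spin (τ i)) / 2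

/-- The joint law of the i.i.d. uniform random variables `(U_τ)_{τ ∈ {−1,1}^n}`. -/
def Unif (n : ℕ) : Measure ((Fin n → Bool) → ℝ) :=
  Measure.pi fun _ => (volume : Measure ℝ).restrict (Set.Icc 0 1)

def ww (m y : ℝ) : ℝ := (1 + m) / 2 * Real.exp (y * (1 - m)) + (1 - m) / 2 * Real.exp (-(y * (1 + m)))
def pp (m y : ℝ) : ℝ := (1 + m) / 2 * Real.exp (y * (1 - m)) / ww m y
def qq (m y : ℝ) : ℝ := (1 - m) / 2 * Real.exp (-(y * (1 + m))) / ww m y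

lemma ww_pos {m : ℝ} (hm : m ∈ Set.Ioo (-1 : ℝ) 1) (y : ℝ) : 0 < ww m y := by
  have h1 : 0 < 1 + m := by linarith [hm.1]
  have h2 : 0 < 1 - m := by linarith [hm.2]
  unfold ww; positivity

lemma pp_pos {m : ℝ} (hm : m ∈ Set.Ioo (-1 : ℝ) 1) (y : ℝ) : 0 < pp m y := by
  have h1 : 0 < 1 + m := by linarith [hm.1]
  have := ww_pos hm y
  unfold pp; positivity

lemma qq_pos {m : ℝ} (hm : m ∈ Set.Ioo (-1 : ℝ) 1) (y : ℝ) : 0 < qq m y := by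
  have h1 : 0 < 1 - m := by linarith [hm.2]
  have := ww_pos hm y
  unfold qq; positivity

lemma pp_add_qq {m : ℝ} (hm : m ∈ Set.Ioo (-1 : ℝ) 1) (y : ℝ) : pp m y + qq m y = 1 := by
  have := ww_pos hm y
  unfold pp qq
  rw [← add_div, div_eq_one_iff_eq this.ne']; rfl

lemma exp_gfun {m : ℝ} (hm : m ∈ Set.Ioo (-1 : ℝ) 1) (y : ℝ) : Real.exp (gfun m y) = ww m y :=
  Real.exp_log (ww_pos hm y)

lemma ww_cont (m : ℝ) : Continuous (ww m) := by unfold ww; fun_prop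
lemma pp_cont {m : ℝ} (hm : m ∈ Set.Ioo (-1 : ℝ) 1) : Continuous (pp m) := by
  unfold pp
  exact Continuous.div (by fun_prop) (ww_cont m) fun y => (ww_pos hm y).ne'
lemma qq_cont {m : ℝ} (hm : m ∈ Set.Ioo (-1 : ℝ) 1) : Continuous (qq m) := by
  unfold qq
  exact Continuous.div (by fun_prop) (ww_cont m) fun y => (ww_pos hm y).ne'
lemma gfun_cont {m : ℝ} (hm : m ∈ Set.Ioo (-1 : ℝ) 1) : Continuous (gfun m) :=
  Continuous.log (ww_cont m) fun y => (ww_pos hm y).ne'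

lemma gfun_deriv {m : ℝ} (hm : m ∈ Set.Ioo (-1 : ℝ) 1) (y : ℝ) :
    HasDerivAt (gfun m) (pp m y - qq m y - m) y := by
  have h0 := ww_pos hm y
  have h1 : HasDerivAt (ww m) ((1 + m) / 2 * (Real.exp (y * (1 - m)) * (1 - m)) +
      (1 - m) / 2 * (Real.exp (-(y * (1 + m))) * (-(1 + m)))) y := by
    unfold ww
    refine HasDerivAt.add (HasDerivAt.const_mul _ ?_) (HasDerivAt.const_mul _ ?_)
    · refine HasDerivAt.exp ?_
      simpa using (hasDerivAt_id y).mul_const (1 - m)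
    · refine HasDerivAt.exp ?_
      simpa [Pi.neg_def] using ((hasDerivAt_id y).mul_const (1 + m)).neg
  have h2 := h1.log h0.ne'
  have h3 := pp_add_qq hm y
  refine HasDerivAt.congr_deriv (f := gfun m) h2 ?_
  have : pp m y - qq m y - m = pp m y * (1 - m) - qq m y * (1 + m) := by
    linear_combination (m : ℝ) * h3
  rw [this]; unfold pp qq; field_simp; ring

lemma gfun_zero (m : ℝ) : gfun m 0 = 0 := by
  unfold gfun
  simp only [zero_mul, Real.exp_zero, neg_zero]
  rw [show (1 + m) / 2 * 1 + (1 - m) / 2 * 1 = 1 by ring, Real.log_one]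

lemma gfun_tangent {m : ℝ} (hm : m ∈ Set.Ioo (-1 : ℝ) 1) (y z : ℝ) :
    gfun m z + (y - z) * (pp m z - qq m z - m) ≤ gfun m y := by
  have hw := ww_pos hm z
  have h1 := convexOn_exp.2 (Set.mem_univ ((y - z) * (1 - m))) (Set.mem_univ (-((y - z) * (1 + m))))
    (pp_pos hm z).le (qq_pos hm z).le (pp_add_qq hm z)
  simp only [smul_eq_mul] at h1
  have h3 := pp_add_qq hm z
  have h2 : ww m y = ww m z * (pp m z * Real.exp ((y - z) * (1 - m)) +
      qq m z * Real.exp (-((y - z) * (1 + m)))) := by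
    unfold pp qq
    field_simp
    rw [mul_assoc, mul_assoc, ← Real.exp_add, ← Real.exp_add]
    unfold ww
    ring_nf
  rw [show gfun m y = Real.log (ww m y) from rfl, Real.le_log_iff_exp_le (ww_pos hm y), h2,
    Real.exp_add, exp_gfun hm]
  refine mul_le_mul_of_nonneg_left (le_trans (le_of_eq ?_) h1) hw.le
  congr 1
  linear_combination ((y - z) * m) * h3

lemma gfun_bound {m : ℝ} (hm : m ∈ Set.Ioo (-1 : ℝ) 1) (y : ℝ) : |gfun m y| ≤ 2 * |y| := by
  have h1 := gfun_tangent hm y 0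
  have h2 := gfun_tangent hm 0 y
  rw [gfun_zero] at h1 h2
  have e0 : pp m 0 - qq m 0 - m = 0 := by
    simp [pp, qq, ww]; ring
  rw [e0] at h1
  have h5 := pp_pos hm y
  have h6 := qq_pos hm y
  have h3 := pp_add_qq hm y
  have : |y * (pp m y - qq m y - m)| ≤ |y| * 2 := by
    rw [abs_mul]
    refine mul_le_mul_of_nonneg_left ?_ (abs_nonneg _)
    rw [abs_le]; constructor <;> linarith [hm.1, hm.2]
  have := le_abs_self (y * (pp m y - qq m y - m))
  rw [abs_of_nonneg (by linarith)]
  linarith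

lemma gd_bound {m : ℝ} (hm : m ∈ Set.Ioo (-1 : ℝ) 1) (y : ℝ) : |pp m y - qq m y - m| ≤ 2 := by
  have h5 := pp_pos hm y
  have h6 := qq_pos hm y
  have h3 := pp_add_qq hm y
  rw [abs_le]; constructor <;> linarith [hm.1, hm.2]

def chi (m l t x : ℝ) : ℂ :=
  (pp m (l * x) : ℂ) * Complex.exp (((2 * t * x * qq m (l * x) : ℝ) : ℂ) * Complex.I) +
  (qq m (l * x) : ℂ) * Complex.exp (((-(2 * t * x * pp m (l * x)) : ℝ) : ℂ) * Complex.I)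

lemma chi_cont {m : ℝ} (hm : m ∈ Set.Ioo (-1 : ℝ) 1) (l : ℝ) :
    Continuous (fun z : ℝ × ℝ => chi m l z.1 z.2) := by
  have := pp_cont hm
  have := qq_cont hm
  unfold chi
  fun_prop

lemma chi_normSq {m : ℝ} (hm : m ∈ Set.Ioo (-1 : ℝ) 1) (l t x : ℝ) :
    ‖chi m l t x‖ ^ 2 = 1 - 4 * (pp m (l * x) * qq m (l * x)) * Real.sin (t * x) ^ 2 := by
  have h3 := pp_add_qq hm (l * x)
  unfold chi
  generalize pp m (l * x) = p at *
  obtain rfl : p = 1 - qq m (l * x) := by linarith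
  clear h3
  generalize qq m (l * x) = q
  have e : Complex.exp (((2 * t * x * q : ℝ) : ℂ) * Complex.I) =
      Complex.exp (((-(2 * t * x * (1 - q)) : ℝ) : ℂ) * Complex.I) *
        Complex.exp (((2 * (t * x) : ℝ) : ℂ) * Complex.I) := by
    rw [← Complex.exp_add]; congr 1; push_cast; ring
  rw [e]
  have : ((1 - q : ℝ) : ℂ) * (Complex.exp (((-(2 * t * x * (1 - q)) : ℝ) : ℂ) * Complex.I) *
        Complex.exp (((2 * (t * x) : ℝ) : ℂ) * Complex.I)) + (q : ℂ) * Complex.exp (((-(2 * t * x * (1 - q)) : ℝ) : ℂ) * Complex.I)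
      = Complex.exp (((-(2 * t * x * (1 - q)) : ℝ) : ℂ) * Complex.I) *
       (((1 - q : ℝ) : ℂ) * Complex.exp (((2 * (t * x) : ℝ) : ℂ) * Complex.I) + q) := by ring
  rw [this, norm_mul, Complex.norm_exp_ofReal_mul_I, one_mul, ← Complex.normSq_eq_norm_sq,
    Complex.normSq_apply]
  simp only [Complex.add_re, Complex.add_im, Complex.re_ofReal_mul, Complex.im_ofReal_mul,
    Complex.exp_ofReal_mul_I_re, Complex.exp_ofReal_mul_I_im, Complex.ofReal_re, Complex.ofReal_im]
  rw [Real.cos_two_mul, Real.sin_two_mul]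
  have := Real.sin_sq_add_cos_sq (t * x)
  have hc : Real.cos (t * x) ^ 2 = 1 - Real.sin (t * x) ^ 2 := by linarith
  generalize Real.cos (t * x) = c at *
  generalize Real.sin (t * x) = s at *
  ring_nf
  rw [show c ^ 4 = (c ^ 2) ^ 2 by ring, hc]
  ring

lemma chi_norm_le {m : ℝ} (hm : m ∈ Set.Ioo (-1 : ℝ) 1) (l t x : ℝ) :
    ‖chi m l t x‖ ≤ 1 - 2 * (pp m (l * x) * qq m (l * x)) * Real.sin (t * x) ^ 2 := by
  have h := chi_normSq hm l t x
  nlinarith [sq_nonneg (‖chi m l t x‖ - 1)]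

lemma chi_norm_le_one {m : ℝ} (hm : m ∈ Set.Ioo (-1 : ℝ) 1) (l t x : ℝ) :
    ‖chi m l t x‖ ≤ 1 := by
  have h := chi_norm_le hm l t x
  have := mul_pos (pp_pos hm (l * x)) (qq_pos hm (l * x))
  nlinarith [mul_nonneg this.le (sq_nonneg (Real.sin (t * x)))]

lemma exp_rem_bound (a : ℝ) : ‖Complex.exp ((a : ℂ) * Complex.I) - 1 - (a : ℂ) * Complex.I‖ ≤ 2 * a ^ 2 := by
  have hn : ‖(a : ℂ) * Complex.I‖ = |a| := by simp
  rcases le_total |a| 1 with h | h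
  · have := Complex.norm_exp_sub_one_sub_id_le (x := (a : ℂ) * Complex.I) (by rw [hn]; exact h)
    rw [hn, sq_abs] at this
    nlinarith [sq_nonneg a]
  · have h1 : ‖Complex.exp ((a : ℂ) * Complex.I) - 1‖ ≤ |a| := by
      have := Real.norm_exp_I_mul_ofReal_sub_one_le (x := a)
      rwa [mul_comm, Real.norm_eq_abs] at this
    calc _ ≤ ‖Complex.exp ((a : ℂ) * Complex.I) - 1‖ + ‖(a : ℂ) * Complex.I‖ := norm_sub_le _ _
      _ ≤ |a| + |a| := by rw [hn]; gcongr
      _ ≤ 2 * a ^ 2 := by rw [← sq_abs a]; nlinarith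

lemma exp_rem_lim (a : ℝ) : Tendsto (fun n : ℕ => (n : ℂ) *
    (Complex.exp (((a / √(n : ℝ) : ℝ) : ℂ) * Complex.I) - 1 - ((a / √(n : ℝ) : ℝ) : ℂ) * Complex.I)) atTop
    (𝓝 (-(a : ℂ) ^ 2 / 2)) := by
  have h0 : Tendsto (fun n : ℕ => a / √(n : ℝ)) atTop (𝓝 0) :=
    tendsto_const_nhds.div_atTop (Real.tendsto_sqrt_atTop.comp tendsto_natCast_atTop_atTop)
  have h1 : Tendsto (fun n : ℕ => ((a / √(n : ℝ) : ℝ) : ℂ) * Complex.I) atTop (𝓝 0) := by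
    have := (Complex.continuous_ofReal.tendsto 0).comp h0
    simpa using this.mul_const Complex.I
  have hO := (Complex.exp_sub_sum_range_isBigO_pow 3).comp_tendsto h1
  obtain ⟨c, hc⟩ := hO.bound
  rw [tendsto_iff_norm_sub_tendsto_zero]
  have h2 : Tendsto (fun n : ℕ => c * a ^ 2 * |a / √(n : ℝ)|) atTop (𝓝 0) := by
    simpa using h0.abs.const_mul (c * a ^ 2)
  refine squeeze_zero' (Eventually.of_forall fun n => norm_nonneg _) ?_ h2
  filter_upwards [hc, eventually_ge_atTop 1] with n hn hn1
  have hnpos : (0 : ℝ) < n := by exact_mod_cast hn1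
  have hs : √(n : ℝ) ^ 2 = n := Real.sq_sqrt hnpos.le
  have hs0 : 0 < √(n : ℝ) := Real.sqrt_pos.2 hnpos
  have hz2 : (n : ℂ) * (((a / √(n : ℝ) : ℝ) : ℂ) * Complex.I) ^ 2 = - (a : ℂ) ^ 2 := by
    rw [mul_pow, Complex.I_sq]
    have : (n : ℝ) * (a / √(n : ℝ)) ^ 2 = a ^ 2 := by rw [div_pow, hs]; field_simp
    have := congrArg (fun r : ℝ => (r : ℂ)) this
    push_cast at this ⊢
    linear_combination -this
  simp only [Function.comp, Finset.sum_range_succ, Finset.sum_range_zero, Nat.factorial] at hn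
  have e : (n : ℂ) *
    (Complex.exp (((a / √(n : ℝ) : ℝ) : ℂ) * Complex.I) - 1 - ((a / √(n : ℝ) : ℝ) : ℂ) * Complex.I) - (-(a : ℂ) ^ 2 / 2)
    = (n : ℂ) * (Complex.exp (((a / √(n : ℝ) : ℝ) : ℂ) * Complex.I) - (0 + (((a / √(n : ℝ) : ℝ) : ℂ) * Complex.I) ^ 0 / ((1 : ℕ) : ℂ) +
      (((a / √(n : ℝ) : ℝ) : ℂ) * Complex.I) ^ 1 / (((0 + 1) * 1 : ℕ) : ℂ) + (((a / √(n : ℝ) : ℝ) : ℂ) * Complex.I) ^ 2 / (((1 + 1) * ((0 + 1) * 1) : ℕ) : ℂ))) := by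
    push_cast at hz2 ⊢
    linear_combination (1 / 2 : ℂ) * hz2
  rw [e, norm_mul, Complex.norm_natCast]
  calc _ ≤ (n : ℝ) * (c * ‖(((a / √(n : ℝ) : ℝ) : ℂ) * Complex.I) ^ 3‖) := by gcongr
    _ = c * a ^ 2 * |a / √(n : ℝ)| := by
      rw [norm_pow, norm_mul, Complex.norm_I, mul_one, Complex.norm_real, Real.norm_eq_abs, pow_succ, sq_abs]
      rw [div_pow, hs]; field_simp

lemma chi_sub_one {m : ℝ} (hm : m ∈ Set.Ioo (-1 : ℝ) 1) (l t x : ℝ) :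
    chi m l t x - 1 = (pp m (l * x) : ℂ) * (Complex.exp (((2 * t * x * qq m (l * x) : ℝ) : ℂ) * Complex.I) - 1
      - ((2 * t * x * qq m (l * x) : ℝ) : ℂ) * Complex.I) +
  (qq m (l * x) : ℂ) * (Complex.exp (((-(2 * t * x * pp m (l * x)) : ℝ) : ℂ) * Complex.I) - 1
    - ((-(2 * t * x * pp m (l * x)) : ℝ) : ℂ) * Complex.I) := by
  have h3 := congrArg (fun r : ℝ => (r : ℂ)) (pp_add_qq hm (l * x))
  unfold chi
  push_cast at h3 ⊢
  linear_combination h3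

lemma chi_sub_one_bound {m : ℝ} (hm : m ∈ Set.Ioo (-1 : ℝ) 1) (l t x : ℝ) :
    ‖chi m l t x - 1‖ ≤ 16 * t ^ 2 * x ^ 2 := by
  rw [chi_sub_one hm]
  have hp := pp_pos hm (l * x)
  have hq := qq_pos hm (l * x)
  have h3 := pp_add_qq hm (l * x)
  have hp1 : pp m (l * x) ≤ 1 := by linarith
  have hq1 : qq m (l * x) ≤ 1 := by linarith
  refine (norm_add_le _ _).trans ?_
  rw [norm_mul, norm_mul, Complex.norm_real, Complex.norm_real, Real.norm_of_nonneg hp.le, Real.norm_of_nonneg hq.le]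
  have b1 := exp_rem_bound (2 * t * x * qq m (l * x))
  have b2 := exp_rem_bound (-(2 * t * x * pp m (l * x)))
  have c1 : 2 * (2 * t * x * qq m (l * x)) ^ 2 ≤ 8 * t ^ 2 * x ^ 2 := by
    have : qq m (l * x) ^ 2 ≤ 1 := by nlinarith
    nlinarith [mul_le_mul_of_nonneg_left this (sq_nonneg (t * x))]
  have c2 : 2 * (-(2 * t * x * pp m (l * x))) ^ 2 ≤ 8 * t ^ 2 * x ^ 2 := by
    have : pp m (l * x) ^ 2 ≤ 1 := by nlinarith
    nlinarith [mul_le_mul_of_nonneg_left this (sq_nonneg (t * x))]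
  have d1 := mul_le_mul hp1 (b1.trans c1) (norm_nonneg _) zero_le_one
  have d2 := mul_le_mul hq1 (b2.trans c2) (norm_nonneg _) zero_le_one
  linarith

lemma chi_lim {m : ℝ} (hm : m ∈ Set.Ioo (-1 : ℝ) 1) (l s x : ℝ) :
    Tendsto (fun n : ℕ => (n : ℂ) * (chi m l (s / √(n : ℝ)) x - 1)) atTop
      (𝓝 ((-(2 * (pp m (l * x) * qq m (l * x)) * x ^ 2 * s ^ 2) : ℝ) : ℂ)) := by
  have h1 := (exp_rem_lim (2 * s * x * qq m (l * x))).const_mul (pp m (l * x) : ℂ)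
  have h2 := (exp_rem_lim (-(2 * s * x * pp m (l * x)))).const_mul (qq m (l * x) : ℂ)
  have h := h1.add h2
  have h3 := congrArg (fun r : ℝ => (r : ℂ)) (pp_add_qq hm (l * x))
  refine Tendsto.congr (fun n => ?_) (h.trans_eq ?_)
  · rw [chi_sub_one hm]
    rw [show 2 * s * x * qq m (l * x) / √(n : ℝ) = 2 * (s / √(n : ℝ)) * x * qq m (l * x) by ring,
      show -(2 * s * x * pp m (l * x)) / √(n : ℝ) = -(2 * (s / √(n : ℝ)) * x * pp m (l * x)) by ring]
    ring
  · congr 1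
    push_cast at h3 ⊢
    linear_combination (-2 * (pp m (l * x) : ℂ) * (qq m (l * x) : ℂ) * x ^ 2 * s ^ 2) * h3

lemma chi_sq_lim {m : ℝ} (hm : m ∈ Set.Ioo (-1 : ℝ) 1) (l s x : ℝ) :
    Tendsto (fun n : ℕ => (n : ℝ) * (‖chi m l (s / √(n : ℝ)) x‖ ^ 2 - 1)) atTop
      (𝓝 (-(4 * (pp m (l * x) * qq m (l * x)) * x ^ 2 * s ^ 2))) := by
  have h := chi_lim hm l s x
  have h0 : Tendsto (fun n : ℕ => chi m l (s / √(n : ℝ)) x) atTop (𝓝 1) := by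
    have h0 : Tendsto (fun n : ℕ => s / √(n : ℝ)) atTop (𝓝 0) :=
      tendsto_const_nhds.div_atTop (Real.tendsto_sqrt_atTop.comp tendsto_natCast_atTop_atTop)
    have hc : Continuous fun t => chi m l t x := (chi_cont hm l).comp (by fun_prop : Continuous fun t : ℝ => (t, x))
    have := (hc.tendsto 0).comp h0
    have e : chi m l 0 x = 1 := by
      have h3 := congrArg (fun r : ℝ => (r : ℂ)) (pp_add_qq hm (l * x))
      push_cast at h3
      simp [chi, h3]
    rwa [e] at this
  have h1 := (Complex.continuous_re.tendsto _).comp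
    ((h.mul (((Complex.continuous_conj.tendsto _).comp h0))).add ((Complex.continuous_conj.tendsto _).comp h))
  refine Tendsto.congr (fun n => ?_) (h1.trans_eq ?_)
  · simp only [Function.comp]
    rw [← Complex.normSq_eq_norm_sq, Complex.normSq_apply]
    simp
    ring
  · congr 1
    rw [map_one, mul_one, Complex.conj_ofReal, ← Complex.ofReal_add, Complex.ofReal_re]; ring

attribute [irreducible] chi pp qq

lemma sin_up {u : ℝ} (hu : 0 ≤ u) : |Real.sin u| ≤ u - u / 100 * min 1 (u ^ 2) := by
  rcases le_total u 2 with h | h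
  · have hv : |u / 2| ≤ 1 := by rw [abs_of_nonneg (by linarith)]; linarith
    have h1 := Real.sin_bound hv
    rw [abs_of_nonneg (by linarith : 0 ≤ u / 2)] at h1
    have h2 := (abs_le.1 h1).2
    have h3 : |Real.sin u| ≤ 2 * Real.sin (u / 2) := by
      have hs : 0 ≤ Real.sin (u / 2) :=
        Real.sin_nonneg_of_nonneg_of_le_pi (by linarith) (by linarith [Real.pi_gt_three])
      have : Real.sin u = 2 * Real.sin (u / 2) * Real.cos (u / 2) := by
        rw [← Real.sin_two_mul]; congr 1; ring
      rw [this, abs_mul, abs_of_nonneg (by linarith : 0 ≤ 2 * Real.sin (u / 2))]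
      exact mul_le_of_le_one_right (by linarith) (Real.abs_cos_le_one _)
    have h4 : u / 100 * min 1 (u ^ 2) ≤ u / 100 * u ^ 2 := by
      gcongr; exact min_le_right _ _
    have h5 : (u / 2) ^ 5 ≤ (u / 2) ^ 3 := pow_le_pow_of_le_one (by linarith) (by linarith) (by norm_num)
    nlinarith [pow_nonneg hu 3]
  · have h4 : u / 100 * min 1 (u ^ 2) ≤ u / 100 * 1 := by
      gcongr; exact min_le_left _ _
    linarith [Real.abs_sin_le_one u]

lemma sinsq_int_pos {c d t : ℝ} (hcd : c < d) (ht : 0 < t) :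
    (d - c) / 200 * min 1 ((d - c) ^ 2) * min 1 (t ^ 2) ≤ ∫ x in c..d, Real.sin (t * x) ^ 2 := by
  have e := intervalIntegral.integral_comp_mul_left (a := c) (b := d) (fun y => Real.sin y ^ 2) ht.ne'
  rw [e, integral_sin_sq, smul_eq_mul]
  have hu : 0 ≤ t * (d - c) := mul_nonneg ht.le (by linarith)
  have h1 := sin_up hu
  have h2 : Real.sin (t * c) * Real.cos (t * c) - Real.sin (t * d) * Real.cos (t * d) =
      - (Real.sin (t * (d - c)) * Real.cos (t * d + t * c)) := by
    rw [mul_sub, Real.sin_sub, Real.cos_add]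
    linear_combination (- Real.sin (t * c) * Real.cos (t * c)) * Real.sin_sq_add_cos_sq (t * d) +
      (Real.sin (t * d) * Real.cos (t * d)) * Real.sin_sq_add_cos_sq (t * c)
  have h3 : Real.sin (t * (d - c)) * Real.cos (t * d + t * c) ≤ |Real.sin (t * (d - c))| := by
    refine (le_abs_self _).trans ?_
    rw [abs_mul]
    exact mul_le_of_le_one_right (abs_nonneg _) (Real.abs_cos_le_one _)
  rw [h2]
  have hm : min 1 ((d - c) ^ 2) * min 1 (t ^ 2) ≤ min 1 ((t * (d - c)) ^ 2) := by
    refine le_min ?_ ?_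
    · exact mul_le_one₀ (min_le_left _ _) (by positivity) (min_le_left _ _)
    · rw [mul_pow, mul_comm (t ^ 2)]
      exact mul_le_mul (min_le_right _ _) (min_le_right _ _) (by positivity) (by positivity)
  calc (d - c) / 200 * min 1 ((d - c) ^ 2) * min 1 (t ^ 2) ≤ (d - c) / 200 * min 1 ((t * (d - c)) ^ 2) := by
        rw [mul_assoc]
        exact mul_le_mul_of_nonneg_left hm (by linarith)
    _ = t⁻¹ * ((t * (d - c)) / 100 * min 1 ((t * (d - c)) ^ 2) / 2) := by field_simp; ring
    _ ≤ _ := by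
      gcongr
      linarith

lemma sinsq_int {c d : ℝ} (hcd : c < d) (t : ℝ) :
    (d - c) / 200 * min 1 ((d - c) ^ 2) * min 1 (t ^ 2) ≤ ∫ x in c..d, Real.sin (t * x) ^ 2 := by
  rcases lt_trichotomy t 0 with h | h | h
  · have := sinsq_int_pos hcd (neg_pos.2 h)
    simpa using this
  · subst h; simp
  · exact sinsq_int_pos hcd h

def vv (μ : Measure ℝ) (m l : ℝ) : ℝ := ∫ x, 4 * (pp m (l * x) * qq m (l * x)) * x ^ 2 ∂μ

lemma pq_le {m : ℝ} (hm : m ∈ Set.Ioo (-1 : ℝ) 1) (y : ℝ) : pp m y * qq m y ≤ 1 := by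
  have h5 := pp_pos hm y
  have h6 := qq_pos hm y
  have h3 := pp_add_qq hm y
  nlinarith

lemma pq_cont {m : ℝ} (hm : m ∈ Set.Ioo (-1 : ℝ) 1) (l : ℝ) :
    Continuous fun x => pp m (l * x) * qq m (l * x) := by
  have := pp_cont hm
  have := qq_cont hm
  fun_prop

lemma vv_int {μ : Measure ℝ} (hA : Assumption1 μ) {m : ℝ} (hm : m ∈ Set.Ioo (-1 : ℝ) 1) (l : ℝ) :
    Integrable (fun x => 4 * (pp m (l * x) * qq m (l * x)) * x ^ 2) μ := by
  refine Integrable.mono' (hA.intSq.const_mul 4) ?_ (Eventually.of_forall fun x => ?_)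
  · have := pq_cont hm l
    exact (by fun_prop : Continuous fun x => 4 * (pp m (l * x) * qq m (l * x)) * x ^ 2).aestronglyMeasurable
  · have h1 := mul_pos (pp_pos hm (l * x)) (qq_pos hm (l * x))
    rw [Real.norm_of_nonneg (by positivity)]
    have := pq_le hm (l * x)
    nlinarith [mul_le_mul_of_nonneg_right this (sq_nonneg x)]

lemma vv_pos {μ : Measure ℝ} (hA : Assumption1 μ) {m : ℝ} (hm : m ∈ Set.Ioo (-1 : ℝ) 1) (l : ℝ) :
    0 < vv μ m l := by
  unfold vv
  rw [integral_pos_iff_support_of_nonneg (fun x => ?_) (vv_int hA hm l)]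
  · obtain ⟨c, d, p, hcd, hp, h⟩ := hA.densityLB
    have h1 := h (Set.Icc c d \ {0}) Set.sdiff_subset (measurableSet_Icc.diff (measurableSet_singleton 0))
    refine lt_of_lt_of_le ?_ (h1.trans (measure_mono ?_))
    · rw [measure_sdiff_null (by simp), Real.volume_Icc]
      exact ENNReal.mul_pos (by simpa using hp) (by simpa using hcd)
    · rintro x ⟨_, hx⟩
      have h1 := mul_pos (pp_pos hm (l * x)) (qq_pos hm (l * x))
      have hx : x ≠ 0 := hx
      simp only [Function.mem_support]
      positivity
  · have h1 := mul_pos (pp_pos hm (l * x)) (qq_pos hm (l * x))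
    simp only [Pi.zero_apply]
    positivity

lemma chi_int {μ : Measure ℝ} [IsProbabilityMeasure μ] {m : ℝ} (hm : m ∈ Set.Ioo (-1 : ℝ) 1) (l t : ℝ) :
    Integrable (fun x => chi m l t x) μ := by
  refine Integrable.of_bound (C := 1) ?_ (Eventually.of_forall fun x => chi_norm_le_one hm l t x)
  exact ((chi_cont hm l).comp (by fun_prop : Continuous fun x : ℝ => (t, x))).aestronglyMeasurable

lemma chi_decay {μ : Measure ℝ} (hA : Assumption1 μ) {m : ℝ} (hm : m ∈ Set.Ioo (-1 : ℝ) 1) (l : ℝ) :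
    ∃ C > 0, ∀ t, ∫ x, ‖chi m l t x‖ ∂μ ≤ 1 - C * min 1 (t ^ 2) := by
  have := hA.isProb
  obtain ⟨c, d, p, hcd, hp, h⟩ := hA.densityLB
  obtain ⟨x0, hx0, hmin⟩ := isCompact_Icc.exists_isMinOn (Set.nonempty_Icc.2 hcd.le) (pq_cont hm l).continuousOn
  set κ := pp m (l * x0) * qq m (l * x0) with hκ
  have hκ0 : 0 < κ := mul_pos (pp_pos hm (l * x0)) (qq_pos hm (l * x0))
  refine ⟨2 * p * κ * ((d - c) / 200 * min 1 ((d - c) ^ 2)), ?_, fun t => ?_⟩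
  · have : 0 < d - c := by linarith
    positivity
  have hle : ENNReal.ofReal p • (volume.restrict (Set.Icc c d)) ≤ μ := by
    refine Measure.le_iff.2 fun s hs => ?_
    rw [Measure.smul_apply, Measure.restrict_apply hs, smul_eq_mul]
    exact (h _ Set.inter_subset_right (hs.inter measurableSet_Icc)).trans (measure_mono Set.inter_subset_left)
  have hcont : Continuous fun x => 2 * (pp m (l * x) * qq m (l * x)) * Real.sin (t * x) ^ 2 := by
    have := pq_cont hm l
    fun_prop
  have hb : ∀ x, 0 ≤ 2 * (pp m (l * x) * qq m (l * x)) * Real.sin (t * x) ^ 2 := fun x => by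
    have h1 := mul_pos (pp_pos hm (l * x)) (qq_pos hm (l * x))
    positivity
  have hI : Integrable (fun x => 2 * (pp m (l * x) * qq m (l * x)) * Real.sin (t * x) ^ 2) μ := by
    refine Integrable.of_bound (C := 2) hcont.aestronglyMeasurable (Eventually.of_forall fun x => ?_)
    rw [Real.norm_of_nonneg (hb x)]
    nlinarith [mul_le_mul (pq_le hm (l * x)) (Real.sin_sq_le_one (t * x)) (sq_nonneg _) zero_le_one]
  have h1 : ∫ x, ‖chi m l t x‖ ∂μ ≤ ∫ x, (1 - 2 * (pp m (l * x) * qq m (l * x)) * Real.sin (t * x) ^ 2) ∂μ :=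
    integral_mono (chi_int hm l t).norm ((integrable_const 1).sub hI) fun x => chi_norm_le hm l t x
  rw [integral_sub (integrable_const 1) hI] at h1
  simp only [integral_const, probReal_univ, smul_eq_mul, mul_one] at h1
  have h2 := integral_mono_measure hle (Eventually.of_forall hb) hI
  rw [integral_smul_measure, ENNReal.toReal_ofReal hp.le, smul_eq_mul] at h2
  have h3 : ∫ x in Set.Icc c d, 2 * κ * Real.sin (t * x) ^ 2 ≤
      ∫ x in Set.Icc c d, 2 * (pp m (l * x) * qq m (l * x)) * Real.sin (t * x) ^ 2 := by
    refine setIntegral_mono_on ?_ ?_ measurableSet_Icc fun x hx => ?_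
    · exact (by fun_prop : Continuous fun x => 2 * κ * Real.sin (t * x) ^ 2).continuousOn.integrableOn_Icc
    · exact hcont.continuousOn.integrableOn_Icc
    · have := hmin hx
      simp only [Set.mem_ofPred_eq] at this
      gcongr
  rw [integral_Icc_eq_integral_Ioc, ← intervalIntegral.integral_of_le hcd.le,
    intervalIntegral.integral_const_mul] at h3
  have h4 := mul_le_mul_of_nonneg_left (sinsq_int hcd t) (by positivity : 0 ≤ 2 * κ)
  have h5 := mul_le_mul_of_nonneg_left (h4.trans h3) hp.le
  have : 2 * p * κ * ((d - c) / 200 * min 1 ((d - c) ^ 2)) * min 1 (t ^ 2) =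
    p * (2 * κ * ((d - c) / 200 * min 1 ((d - c) ^ 2) * min 1 (t ^ 2))) := by ring
  linarith

def Zn {Ω : Type*} (m l : ℝ) (X : ℕ → Ω → ℝ) (n : ℕ) (t : ℝ) (ω : Ω) : ℂ := ∏ i : Fin n, chi m l t (X i ω)

structure Setup {Ω : Type*} [MeasurableSpace Ω] (P : Measure Ω) (X : ℕ → Ω → ℝ) (μ : Measure ℝ) : Prop where
  meas : ∀ i, Measurable (X i)
  indep : iIndepFun X P
  dist : ∀ i, Measure.map (X i) P = μ

lemma E_prod {Ω : Type*} [MeasurableSpace Ω] {P : Measure Ω} {X : ℕ → Ω → ℝ} {μ : Measure ℝ}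
    (hS : Setup P X μ) {𝕜 : Type*} [RCLike 𝕜] (F : ℝ → 𝕜) (hF : Continuous F) (n : ℕ) :
    ∫ ω, ∏ i : Fin n, F (X i ω) ∂P = (∫ x, F x ∂μ) ^ n := by
  have h := (hS.indep.precomp (g := fun i : Fin n => (i : ℕ)) Fin.val_injective)
  have h2 := h.integral_fun_prod_comp (f := fun _ => F) (fun i => (hS.meas i).aemeasurable)
    (fun i => hF.aestronglyMeasurable)
  refine h2.trans ?_
  have : ∀ i : Fin n, ∫ ω, F (X i ω) ∂P = ∫ x, F x ∂μ := fun i => by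
    rw [← hS.dist i, integral_map (hS.meas i).aemeasurable hF.aestronglyMeasurable]
  rw [Finset.prod_congr rfl fun i _ => this i]
  simp

attribute [irreducible] Zn

lemma chi_contx {m : ℝ} (hm : m ∈ Set.Ioo (-1 : ℝ) 1) (l t : ℝ) : Continuous (chi m l t) :=
  (chi_cont hm l).comp (by fun_prop : Continuous fun x : ℝ => (t, x))

lemma Zn_meas {Ω : Type*} [MeasurableSpace Ω] {X : ℕ → Ω → ℝ} (hX : ∀ i, Measurable (X i))
    {m : ℝ} (hm : m ∈ Set.Ioo (-1 : ℝ) 1) (l : ℝ) (n : ℕ) :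
    Measurable (fun z : ℝ × Ω => Zn m l X n z.1 z.2) := by
  unfold Zn
  refine Finset.measurable_prod _ fun i _ => ?_
  have h : Measurable (fun z : ℝ × Ω => ((z.1, X i z.2) : ℝ × ℝ)) :=
    Measurable.prodMk measurable_fst ((hX i).comp measurable_snd)
  have h2 := (chi_cont hm l).measurable
  exact h2.comp h

lemma Zn_measω {Ω : Type*} [MeasurableSpace Ω] {X : ℕ → Ω → ℝ} (hX : ∀ i, Measurable (X i))
    {m : ℝ} (hm : m ∈ Set.Ioo (-1 : ℝ) 1) (l : ℝ) (n : ℕ) (t : ℝ) :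
    Measurable (fun ω => Zn m l X n t ω) := by
  have h : Measurable (fun ω : Ω => ((t, ω) : ℝ × Ω)) := measurable_prodMk_left
  have h2 := Zn_meas hX hm l n
  exact h2.comp h

lemma Zn_norm_le {Ω : Type*} (X : ℕ → Ω → ℝ)
    {m : ℝ} (hm : m ∈ Set.Ioo (-1 : ℝ) 1) (l : ℝ) (n : ℕ) (t : ℝ) (ω : Ω) : ‖Zn m l X n t ω‖ ≤ 1 := by
  unfold Zn
  rw [norm_prod]
  exact Finset.prod_le_one (fun _ _ => norm_nonneg _) fun i _ => chi_norm_le_one hm _ _ _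

lemma Zn_decay {Ω : Type*} [MeasurableSpace Ω] {P : Measure Ω} {X : ℕ → Ω → ℝ} {μ : Measure ℝ}
    (hS : Setup P X μ) (hA : Assumption1 μ) {m : ℝ} (hm : m ∈ Set.Ioo (-1 : ℝ) 1) (l : ℝ) :
    ∃ C > 0, ∀ n t, ∫ ω, ‖Zn m l X n t ω‖ ∂P ≤ Real.exp (-(C * (n * min 1 (t ^ 2)))) := by
  obtain ⟨C, hC, h⟩ := chi_decay hA hm l
  refine ⟨C, hC, fun n t => ?_⟩
  have e : ∀ ω, ‖Zn m l X n t ω‖ = ∏ i : Fin n, ‖chi m l t (X i ω)‖ := fun ω => by unfold Zn; exact norm_prod _ _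
  simp_rw [e]
  rw [E_prod hS (fun x => ‖chi m l t x‖) (chi_contx hm l t).norm n]
  calc _ ≤ (Real.exp (-(C * min 1 (t ^ 2)))) ^ n := by
        refine pow_le_pow_left₀ (integral_nonneg fun _ => norm_nonneg _) ((h t).trans ?_) n
        linarith [Real.add_one_le_exp (-(C * min 1 (t ^ 2)))]
    _ = _ := by rw [← Real.exp_nat_mul]; congr 1; ring

lemma chi_E_lim {μ : Measure ℝ} (hA : Assumption1 μ) {m : ℝ} (hm : m ∈ Set.Ioo (-1 : ℝ) 1) (l s : ℝ) :
    Tendsto (fun n : ℕ => (∫ x, chi m l (s / √(n : ℝ)) x ∂μ) ^ n) atTop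
      (𝓝 (Complex.exp (((-(vv μ m l * s ^ 2 / 2) : ℝ)) : ℂ))) := by
  have := hA.isProb
  have key : Tendsto (fun n : ℕ => ∫ x, (n : ℂ) * (chi m l (s / √(n : ℝ)) x - 1) ∂μ) atTop
      (𝓝 (∫ x, ((-(2 * (pp m (l * x) * qq m (l * x)) * x ^ 2 * s ^ 2) : ℝ) : ℂ) ∂μ)) := by
    refine tendsto_integral_of_dominated_convergence (fun x => 16 * s ^ 2 * x ^ 2) (fun n => ?_)
      (hA.intSq.const_mul _) (fun n => Eventually.of_forall fun x => ?_)
      (Eventually.of_forall fun x => chi_lim hm l s x)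
    · have := chi_contx hm l (s / √(n : ℝ))
      exact (by fun_prop : Continuous fun x => (n : ℂ) * (chi m l (s / √(n : ℝ)) x - 1)).aestronglyMeasurable
    · rw [norm_mul, Complex.norm_natCast]
      rcases Nat.eq_zero_or_pos n with h | h
      · subst h; simp; positivity
      have hn : (0 : ℝ) < n := by exact_mod_cast h
      calc _ ≤ (n : ℝ) * (16 * (s / √(n : ℝ)) ^ 2 * x ^ 2) := by
            gcongr; exact chi_sub_one_bound hm l _ x
        _ = _ := by rw [div_pow, Real.sq_sqrt hn.le]; field_simp
  have e2 : ∫ x, ((-(2 * (pp m (l * x) * qq m (l * x)) * x ^ 2 * s ^ 2) : ℝ) : ℂ) ∂μ =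
      ((-(vv μ m l * s ^ 2 / 2) : ℝ) : ℂ) := by
    rw [integral_complex_ofReal]
    congr 1
    unfold vv
    rw [← integral_mul_const, ← integral_div, ← integral_neg]
    refine integral_congr_ae (Eventually.of_forall fun x => ?_)
    simp only; ring
  rw [e2] at key
  have k2 : Tendsto (fun n : ℕ => (n : ℂ) * (∫ x, chi m l (s / √(n : ℝ)) x ∂μ - 1)) atTop
      (𝓝 ((-(vv μ m l * s ^ 2 / 2) : ℝ) : ℂ)) := by
    refine key.congr fun n => ?_
    rw [integral_const_mul, integral_sub (chi_int hm l _) (integrable_const _)]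
    simp
  simpa using Complex.tendsto_one_add_pow_exp_of_tendsto k2

lemma chi_E_sq_lim {μ : Measure ℝ} (hA : Assumption1 μ) {m : ℝ} (hm : m ∈ Set.Ioo (-1 : ℝ) 1) (l s : ℝ) :
    Tendsto (fun n : ℕ => (∫ x, ‖chi m l (s / √(n : ℝ)) x‖ ^ 2 ∂μ) ^ n) atTop
      (𝓝 (Real.exp (-(vv μ m l * s ^ 2)))) := by
  have := hA.isProb
  have key : Tendsto (fun n : ℕ => ∫ x, (n : ℝ) * (‖chi m l (s / √(n : ℝ)) x‖ ^ 2 - 1) ∂μ) atTop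
      (𝓝 (∫ x, (-(4 * (pp m (l * x) * qq m (l * x)) * x ^ 2 * s ^ 2)) ∂μ)) := by
    refine tendsto_integral_of_dominated_convergence (fun x => 4 * s ^ 2 * x ^ 2) (fun n => ?_)
      (hA.intSq.const_mul _) (fun n => Eventually.of_forall fun x => ?_)
      (Eventually.of_forall fun x => chi_sq_lim hm l s x)
    · have := chi_contx hm l (s / √(n : ℝ))
      exact (by fun_prop : Continuous fun x => (n : ℝ) * (‖chi m l (s / √(n : ℝ)) x‖ ^ 2 - 1)).aestronglyMeasurable
    · rcases Nat.eq_zero_or_pos n with h | h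
      · subst h; simp; positivity
      have hn : (0 : ℝ) < n := by exact_mod_cast h
      rw [chi_normSq hm, norm_mul, Real.norm_natCast, Real.norm_eq_abs]
      have h1 := mul_pos (pp_pos hm (l * x)) (qq_pos hm (l * x))
      have h2 := pq_le hm (l * x)
      have h3 : Real.sin (s / √(n : ℝ) * x) ^ 2 ≤ (s / √(n : ℝ) * x) ^ 2 := sq_le_sq.2 (Real.abs_sin_le_abs)
      have h4 := mul_le_mul h2 h3 (sq_nonneg _) zero_le_one
      rw [show 1 - 4 * (pp m (l * x) * qq m (l * x)) * Real.sin (s / √(n : ℝ) * x) ^ 2 - 1 =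
        - (4 * ((pp m (l * x) * qq m (l * x)) * Real.sin (s / √(n : ℝ) * x) ^ 2)) by ring, abs_neg,
        abs_of_nonneg (by positivity)]
      calc _ ≤ (n : ℝ) * (4 * (1 * (s / √(n : ℝ) * x) ^ 2)) := by gcongr
        _ = _ := by rw [mul_pow, div_pow, Real.sq_sqrt hn.le]; field_simp
  have e2 : ∫ x, (-(4 * (pp m (l * x) * qq m (l * x)) * x ^ 2 * s ^ 2)) ∂μ =
      (-(vv μ m l * s ^ 2)) := by
    unfold vv
    rw [← integral_mul_const, ← integral_neg]
  rw [e2] at key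
  have hI : ∀ t, Integrable (fun x => ‖chi m l t x‖ ^ 2) μ := fun t => by
    refine Integrable.of_bound (C := 1) ((chi_contx hm l t).norm.pow 2).aestronglyMeasurable
      (Eventually.of_forall fun x => ?_)
    rw [Real.norm_of_nonneg (by positivity)]
    exact pow_le_one₀ (norm_nonneg _) (chi_norm_le_one hm l t x)
  have k2 : Tendsto (fun n : ℕ => (n : ℝ) * (∫ x, ‖chi m l (s / √(n : ℝ)) x‖ ^ 2 ∂μ - 1)) atTop
      (𝓝 (-(vv μ m l * s ^ 2))) := by
    refine key.congr fun n => ?_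
    rw [integral_const_mul, integral_sub (hI _) (integrable_const _)]
    simp
  simpa using Real.tendsto_one_add_pow_exp_of_tendsto k2

lemma Zn_int {Ω : Type*} [MeasurableSpace Ω] {P : Measure Ω} [IsProbabilityMeasure P] {X : ℕ → Ω → ℝ}
    (hX : ∀ i, Measurable (X i)) {m : ℝ} (hm : m ∈ Set.Ioo (-1 : ℝ) 1) (l t : ℝ) (n : ℕ) :
    Integrable (fun ω => Zn m l X n t ω) P :=
  Integrable.of_bound (C := 1) (Zn_measω hX hm l n t).aestronglyMeasurable
    (Eventually.of_forall fun ω => Zn_norm_le X hm l n t ω)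

lemma Zn_L2 {Ω : Type*} [MeasurableSpace Ω] {P : Measure Ω} [IsProbabilityMeasure P]
    {X : ℕ → Ω → ℝ} {μ : Measure ℝ}
    (hS : Setup P X μ) (hA : Assumption1 μ) {m : ℝ} (hm : m ∈ Set.Ioo (-1 : ℝ) 1) (l s : ℝ) :
    Tendsto (fun n : ℕ => ∫ ω, ‖Zn m l X n (s / √(n : ℝ)) ω - ((Real.exp (-(vv μ m l * s ^ 2 / 2)) : ℝ) : ℂ)‖ ^ 2 ∂P)
      atTop (𝓝 0) := by
  set c := Real.exp (-(vv μ m l * s ^ 2 / 2)) with hc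
  have hc2 : Real.exp (-(vv μ m l * s ^ 2)) = c ^ 2 := by rw [hc, ← Real.exp_nat_mul]; congr 1; push_cast; ring
  have h1 := chi_E_lim hA hm l s
  have h2 := chi_E_sq_lim hA hm l s
  rw [hc2] at h2
  rw [← Complex.ofReal_exp, ← hc] at h1
  have h3 := (h2.sub (((Complex.continuous_re.tendsto _).comp h1).const_mul (2 * c))).add_const (c ^ 2)
  refine Tendsto.congr (fun n => ?_) (h3.trans_eq ?_)
  · have hI1 : Integrable (fun ω => ‖Zn m l X n (s / √(n : ℝ)) ω‖ ^ 2) P := by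
      refine Integrable.of_bound (C := 1) ((Zn_measω hS.meas hm l n _).norm.pow_const 2).aestronglyMeasurable
        (Eventually.of_forall fun x => ?_)
      rw [Real.norm_of_nonneg (by positivity)]
      exact pow_le_one₀ (norm_nonneg _) (Zn_norm_le X hm l n _ x)
    have hI2 := Zn_int (P := P) hS.meas hm l (s / √(n : ℝ)) n
    have e1 : ∀ ω, ‖Zn m l X n (s / √(n : ℝ)) ω - (c : ℂ)‖ ^ 2 = ‖Zn m l X n (s / √(n : ℝ)) ω‖ ^ 2
        - 2 * c * (Zn m l X n (s / √(n : ℝ)) ω).re + c ^ 2 := fun ω => by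
      rw [← Complex.normSq_eq_norm_sq, ← Complex.normSq_eq_norm_sq, Complex.normSq_apply, Complex.normSq_apply]
      simp
      ring
    simp_rw [e1]
    have hI3 : Integrable (fun ω => 2 * c * (Zn m l X n (s / √(n : ℝ)) ω).re) P := hI2.re.const_mul _
    have hI4 : Integrable (fun ω => ‖Zn m l X n (s / √(n : ℝ)) ω‖ ^ 2
        - 2 * c * (Zn m l X n (s / √(n : ℝ)) ω).re) P := hI1.sub hI3
    rw [integral_add hI4 (integrable_const _), integral_sub hI1 hI3,
      integral_const_mul]
    have e2 : ∫ ω, ‖Zn m l X n (s / √(n : ℝ)) ω‖ ^ 2 ∂P = (∫ x, ‖chi m l (s / √(n : ℝ)) x‖ ^ 2 ∂μ) ^ n := by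
      rw [← E_prod hS (fun x => ‖chi m l (s / √(n : ℝ)) x‖ ^ 2) ((chi_contx hm l _).norm.pow 2) n]
      simp [Zn, norm_prod, Finset.prod_pow]
    have e3 : ∫ ω, Zn m l X n (s / √(n : ℝ)) ω ∂P = (∫ x, chi m l (s / √(n : ℝ)) x ∂μ) ^ n := by
      unfold Zn
      exact E_prod hS _ (chi_contx hm l _) n
    have e4 : ∫ ω, (Zn m l X n (s / √(n : ℝ)) ω).re ∂P = (∫ ω, Zn m l X n (s / √(n : ℝ)) ω ∂P).re :=
      integral_re hI2
    rw [e2, e4, e3]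
    simp
  · congr 1
    rw [Complex.ofReal_re]; ring

lemma Zn_L1 {Ω : Type*} [MeasurableSpace Ω] {P : Measure Ω} [IsProbabilityMeasure P]
    {X : ℕ → Ω → ℝ} {μ : Measure ℝ}
    (hS : Setup P X μ) (hA : Assumption1 μ) {m : ℝ} (hm : m ∈ Set.Ioo (-1 : ℝ) 1) (l s : ℝ) :
    Tendsto (fun n : ℕ => ∫ ω, ‖Zn m l X n (s / √(n : ℝ)) ω - ((Real.exp (-(vv μ m l * s ^ 2 / 2)) : ℝ) : ℂ)‖ ∂P)
      atTop (𝓝 0) := by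
  have h := Zn_L2 hS hA hm l s
  set c := Real.exp (-(vv μ m l * s ^ 2 / 2)) with hc
  refine Metric.tendsto_atTop.2 fun ε hε => ?_
  obtain ⟨N, hN⟩ := Metric.tendsto_atTop.1 h (ε ^ 2 / 4) (by positivity)
  refine ⟨N, fun n hn => ?_⟩
  have h1 := hN n hn
  rw [dist_zero_right, Real.norm_of_nonneg (integral_nonneg fun _ => by positivity)] at h1 ⊢
  have hI0 : Integrable (fun ω => Zn m l X n (s / √(n : ℝ)) ω - (c : ℂ)) P :=
    (Zn_int (P := P) hS.meas hm l (s / √(n : ℝ)) n).sub (integrable_const _)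
  have hI2 : Integrable (fun ω => ‖Zn m l X n (s / √(n : ℝ)) ω - (c : ℂ)‖ ^ 2) P := by
    refine Integrable.of_bound (C := (1 + ‖(c : ℂ)‖) ^ 2) (hI0.1.norm.pow 2)
        (Eventually.of_forall fun x => ?_)
    rw [Real.norm_of_nonneg (by positivity)]
    refine pow_le_pow_left₀ (norm_nonneg _) ((norm_sub_le _ _).trans ?_) 2
    gcongr
    exact Zn_norm_le X hm l n _ x
  have h2 : ∫ ω, ‖Zn m l X n (s / √(n : ℝ)) ω - (c : ℂ)‖ ∂P ≤
      ∫ ω, (ε / 2 + ‖Zn m l X n (s / √(n : ℝ)) ω - (c : ℂ)‖ ^ 2 * (1 / ε)) ∂P := by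
    refine integral_mono hI0.norm ((integrable_const _).add (hI2.mul_const _)) fun ω => ?_
    simp only
    generalize ‖Zn m l X n (s / √(n : ℝ)) ω - (c : ℂ)‖ = a
    have : ε / 2 + a ^ 2 * (1 / ε) - a = ((ε / 2 - a) ^ 2 + ε ^ 2 / 4) / ε := by field_simp; ring
    have : 0 ≤ ((ε / 2 - a) ^ 2 + ε ^ 2 / 4) / ε := by positivity
    linarith
  rw [integral_add (integrable_const _) (hI2.mul_const _), integral_mul_const] at h2
  simp only [integral_const, probReal_univ, smul_eq_mul, one_mul] at h2
  have h3 : (∫ ω, ‖Zn m l X n (s / √(n : ℝ)) ω - (c : ℂ)‖ ^ 2 ∂P) * (1 / ε) < ε ^ 2 / 4 * (1 / ε) := by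
    gcongr
  have h4 : ε ^ 2 / 4 * (1 / ε) = ε / 4 := by field_simp
  linarith

lemma fourier_pkg (g : ℝ → ℝ) (hg : ContDiff ℝ ((⊤ : ℕ∞) : WithTop ℕ∞) g) (hc : HasCompactSupport g) :
    ∃ (F : ℝ → ℂ) (K : ℝ), Continuous F ∧ 0 ≤ K ∧ (∀ t, ‖F t‖ ≤ K * (1 + t ^ 2)⁻¹) ∧
      F 0 = ((∫ x, g x : ℝ) : ℂ) ∧
      ∀ x : ℝ, (g x : ℂ) = ∫ t : ℝ, Complex.exp (((2 * π * t * x : ℝ) : ℂ) * Complex.I) * F t := by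
  have hg' : ContDiff ℝ ((⊤ : ℕ∞) : WithTop ℕ∞) (fun x => (g x : ℂ)) := Complex.ofRealCLM.contDiff.comp hg
  have hc' : HasCompactSupport (fun x => (g x : ℂ)) := hc.comp_left (g := fun r : ℝ => (r : ℂ)) (by simp)
  set S : SchwartzMap ℝ ℂ := hc'.toSchwartzMap hg' with hSdef
  have hSx : ∀ x, S x = (g x : ℂ) := fun x => rfl
  set T : SchwartzMap ℝ ℂ := FourierTransform.fourier S with hT
  have hT1 : (T : ℝ → ℂ) = FourierTransform.fourier (S : ℝ → ℂ) := SchwartzMap.fourier_coe S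
  obtain ⟨C0, hC0, h0⟩ := T.decay 0 0
  obtain ⟨C2, hC2, h2⟩ := T.decay 2 0
  refine ⟨T, C0 + C2, T.continuous, by positivity, fun t => ?_, ?_, fun x => ?_⟩
  · have a0 := h0 t
    have a2 := h2 t
    simp only [pow_zero, one_mul, norm_iteratedFDeriv_zero, Real.norm_eq_abs, sq_abs] at a0 a2
    rw [← div_eq_mul_inv, le_div_iff₀ (by positivity)]
    linarith
  · rw [hT1, Real.fourier_eq', ← integral_complex_ofReal]
    simp [hSx]
  · have := S.continuous.fourierInv_fourier_eq S.integrable (by rw [← hT1]; exact T.integrable)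
    have h3 := congrFun this x
    rw [← hT1, Real.fourierInv_eq', hSx] at h3
    rw [← h3]
    refine integral_congr_ae (Eventually.of_forall fun t => ?_)
    simp only [smul_eq_mul]
    congr 4
    simp; ring

def Tw (m l : ℝ) (n : ℕ) (hs : ℕ → ℝ) (τ : Fin n → Bool) : ℝ :=
  ∏ i : Fin n, (if τ i then pp m (l * hs i) else qq m (l * hs i))
def Mn (m l : ℝ) (n : ℕ) (hs : ℕ → ℝ) : ℝ :=
  ∑ i : Fin n, hs i * (pp m (l * hs i) - qq m (l * hs i) - m)
def Et (m l : ℝ) (n : ℕ) (hs : ℕ → ℝ) (φ : ℝ → ℝ) : ℝ := ∑ τ : Fin n → Bool, Tw m l n hs τ * φ (Hn m n hs τ)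

lemma char_prod {m : ℝ} (hm : m ∈ Set.Ioo (-1 : ℝ) 1) (l t : ℝ) (n : ℕ) (hs : ℕ → ℝ) :
    ∑ τ : Fin n → Bool, (Tw m l n hs τ : ℂ) *
      Complex.exp (((t * (Hn m n hs τ - Mn m l n hs) : ℝ) : ℂ) * Complex.I) = ∏ i : Fin n, chi m l t (hs i) := by
  have hchi : ∀ i : Fin n, chi m l t (hs i) = ∑ b : Bool,
      (((if b then pp m (l * hs i) else qq m (l * hs i) : ℝ) : ℂ) *
        Complex.exp (((t * (hs i * (spin b - m) - hs i * (pp m (l * hs i) - qq m (l * hs i) - m)) : ℝ) : ℂ) * Complex.I)) := by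
    intro i
    have h3 := pp_add_qq hm (l * hs i)
    rw [Fintype.sum_bool]
    unfold chi
    simp only [spin, if_true, Bool.false_eq_true, if_false]
    congr 4
    · rw [Complex.ofReal_inj]
      linear_combination (t * hs i) * h3
    · rw [Complex.ofReal_inj]
      linear_combination (-t * hs i) * h3
  rw [Finset.prod_congr rfl fun i _ => hchi i, Finset.prod_univ_sum, Fintype.piFinset_univ]
  refine Finset.sum_congr rfl fun τ _ => ?_
  rw [Finset.prod_mul_distrib, ← Complex.exp_sum, Tw, Complex.ofReal_prod, ← Finset.sum_mul, ← Complex.ofReal_sum,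
    Hn, Mn, ← Finset.sum_sub_distrib, Finset.mul_sum]

lemma Et_fourier {m : ℝ} (hm : m ∈ Set.Ioo (-1 : ℝ) 1) (l : ℝ) (n : ℕ) (hs : ℕ → ℝ) (A : ℝ)
    {g : ℝ → ℝ} {F : ℝ → ℂ} {K : ℝ} (hF : Continuous F) (hK : ∀ t, ‖F t‖ ≤ K * (1 + t ^ 2)⁻¹)
    (hinv : ∀ x : ℝ, (g x : ℂ) = ∫ t : ℝ, Complex.exp (((2 * π * t * x : ℝ) : ℂ) * Complex.I) * F t) :
    ((Et m l n hs fun y => g (y - A)) : ℂ) = ∫ t : ℝ,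
      Complex.exp (((2 * π * t * (Mn m l n hs - A) : ℝ) : ℂ) * Complex.I) *
        (F t * ∏ i : Fin n, chi m l (2 * π * t) (hs i)) := by
  have hFi : Integrable F := by
    refine Integrable.mono' (integrable_inv_one_add_sq.const_mul K) hF.aestronglyMeasurable
      (Eventually.of_forall hK)
  unfold Et
  push_cast
  simp_rw [← char_prod hm, hinv]
  rw [← Finset.sum_congr rfl fun τ _ => integral_const_mul _ _, ← integral_finsetSum]
  · refine integral_congr_ae (Eventually.of_forall fun t => ?_)
    simp only [Finset.mul_sum]
    refine Finset.sum_congr rfl fun τ _ => ?_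
    have : Complex.exp (((2 * π * t * (Hn m n hs τ - A) : ℝ) : ℂ) * Complex.I) =
      Complex.exp (((2 * π * t * (Mn m l n hs - A) : ℝ) : ℂ) * Complex.I) *
      Complex.exp (((2 * π * t * (Hn m n hs τ - Mn m l n hs) : ℝ) : ℂ) * Complex.I) := by
      rw [← Complex.exp_add]; congr 1; push_cast; ring
    push_cast at this ⊢
    rw [this]
    generalize Complex.exp _ = a
    generalize Complex.exp _ = b
    ring
  · intro τ _
    refine Integrable.const_mul ?_ _
    refine hFi.mono ?_ (Eventually.of_forall fun t => ?_)
    · exact (by fun_prop : Continuous fun t : ℝ => Complex.exp (((2 * π * t * (Hn m n hs τ - A) : ℝ) : ℂ) * Complex.I) * F t).aestronglyMeasurable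
    · rw [norm_mul, Complex.norm_exp_ofReal_mul_I, one_mul]

lemma gauss_ft {v : ℝ} (hv : 0 < v) (b : ℝ) :
    ∫ s : ℝ, Complex.exp (((s * b : ℝ) : ℂ) * Complex.I) * ((Real.exp (-(v * s ^ 2 / 2)) : ℝ) : ℂ) =
      ((√(2 * π / v) * Real.exp (-(b ^ 2 / (2 * v))) : ℝ) : ℂ) := by
  have h := fourierIntegral_gaussian (b := ((v / 2 : ℝ) : ℂ)) (by rw [Complex.ofReal_re]; positivity) (b : ℂ)
  have e1 : ((π : ℂ) / ((v / 2 : ℝ) : ℂ)) ^ (1 / 2 : ℂ) = ((√(2 * π / v) : ℝ) : ℂ) := by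
    rw [Real.sqrt_eq_rpow, Complex.ofReal_cpow (by positivity)]
    push_cast
    congr 1
    field_simp
  rw [e1] at h
  convert h using 1
  · refine integral_congr_ae (Eventually.of_forall fun s => ?_)
    simp only
    push_cast
    congr 2 <;> ring
  · push_cast
    congr 2
    field_simp
    ring

lemma llt_bound {m : ℝ} (hm : m ∈ Set.Ioo (-1 : ℝ) 1) (l : ℝ) {n : ℕ} (hn : 1 ≤ n) (hs : ℕ → ℝ) (A : ℝ)
    {v : ℝ} (hv : 0 < v)
    {g : ℝ → ℝ} {F : ℝ → ℂ} {K : ℝ} (hF : Continuous F) (hK : ∀ t, ‖F t‖ ≤ K * (1 + t ^ 2)⁻¹)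
    (hF0 : F 0 = ((∫ x, g x : ℝ) : ℂ))
    (hinv : ∀ x : ℝ, (g x : ℂ) = ∫ t : ℝ, Complex.exp (((2 * π * t * x : ℝ) : ℂ) * Complex.I) * F t) :
    ‖√(2 * π * n * v) * (Et m l n hs fun y => g (y - A)) -
      Real.exp (-((A - Mn m l n hs) ^ 2 / (2 * n * v))) * ∫ x, g x‖ₑ ≤
    ENNReal.ofReal (√(2 * π * v) * (2 * π)⁻¹) * ∫⁻ s : ℝ, ‖F (s / (2 * π * √(n : ℝ))) * ∏ i : Fin n, chi m l (s / √(n : ℝ)) (hs i)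
      - F 0 * ((Real.exp (-(v * s ^ 2 / 2)) : ℝ) : ℂ)‖ₑ := by
  have hnpos : (0 : ℝ) < n := by exact_mod_cast hn
  have hsq : 0 < √(n : ℝ) := Real.sqrt_pos.2 hnpos
  have hsq2 : √(n : ℝ) ^ 2 = n := Real.sq_sqrt hnpos.le
  have hpi := Real.pi_pos
  set M := Mn m l n hs with hM
  set c : ℝ := (2 * π * √(n : ℝ))⁻¹ with hc
  have hcpos : 0 < c := by positivity
  have h1 := Et_fourier hm l n hs A hF hK hinv
  have h2 := Measure.integral_comp_mul_left (fun t : ℝ =>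
      Complex.exp (((2 * π * t * (M - A) : ℝ) : ℂ) * Complex.I) *
        (F t * ∏ i : Fin n, chi m l (2 * π * t) (hs i))) c
  rw [← h1] at h2
  have h3 := gauss_ft hv ((M - A) / √(n : ℝ))
  set U : ℝ → ℂ := fun s => F (s / (2 * π * √(n : ℝ))) * ∏ i : Fin n, chi m l (s / √(n : ℝ)) (hs i) with hU
  have e1 : ∀ s : ℝ, Complex.exp (((2 * π * (c * s) * (M - A) : ℝ) : ℂ) * Complex.I) *
        (F (c * s) * ∏ i : Fin n, chi m l (2 * π * (c * s)) (hs i)) =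
      Complex.exp (((s * ((M - A) / √(n : ℝ)) : ℝ) : ℂ) * Complex.I) * U s := fun s => by
    have a1 : 2 * π * (c * s) = s / √(n : ℝ) := by rw [hc]; field_simp
    have a2 : c * s = s / (2 * π * √(n : ℝ)) := by rw [hc]; field_simp
    rw [a1, a2, hU]
    congr 4
    field_simp
  simp_rw [e1] at h2
  have hUc : Continuous U := by
    have : ∀ i : Fin n, Continuous fun s : ℝ => chi m l (s / √(n : ℝ)) (hs i) := fun i =>
      (chi_cont hm l).comp (by fun_prop : Continuous fun s : ℝ => (s / √(n : ℝ), hs i))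
    rw [hU]
    fun_prop
  have hUi : Integrable U := by
    have hb : Integrable fun s : ℝ => K * (1 + (s / (2 * π * √(n : ℝ))) ^ 2)⁻¹ :=
      (integrable_inv_one_add_sq.const_mul K).comp_div (by positivity)
    refine hb.mono' hUc.aestronglyMeasurable (Eventually.of_forall fun s => ?_)
    rw [hU]
    simp only
    rw [norm_mul, norm_prod]
    refine le_trans (mul_le_of_le_one_right (norm_nonneg _) ?_) (hK _)
    exact Finset.prod_le_one (fun _ _ => norm_nonneg _) fun i _ => chi_norm_le_one hm _ _ _
  have hGi : Integrable fun s : ℝ => ((Real.exp (-(v * s ^ 2 / 2)) : ℝ) : ℂ) := by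
    have := (integrable_exp_neg_mul_sq (b := v / 2) (by positivity)).ofReal (𝕜 := ℂ)
    refine this.congr (Eventually.of_forall fun s => ?_)
    simp only
    congr 2
    ring
  have hmod : ∀ {W : ℝ → ℂ}, Integrable W → Integrable fun s : ℝ =>
      Complex.exp (((s * ((M - A) / √(n : ℝ)) : ℝ) : ℂ) * Complex.I) * W s := fun {W} hW => by
    refine hW.mono (AEStronglyMeasurable.mul ?_ hW.1) (Eventually.of_forall fun t => ?_)
    · exact (by fun_prop : Continuous fun s : ℝ => Complex.exp (((s * ((M - A) / √(n : ℝ)) : ℝ) : ℂ) * Complex.I)).aestronglyMeasurable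
    · rw [norm_mul, Complex.norm_exp_ofReal_mul_I, one_mul]
  have key : ((√(2 * π * n * v) * (Et m l n hs fun y => g (y - A)) -
      Real.exp (-((A - M) ^ 2 / (2 * n * v))) * ∫ x, g x : ℝ) : ℂ) =
      ((√(2 * π * v) * (2 * π)⁻¹ : ℝ) : ℂ) * ∫ s : ℝ, Complex.exp (((s * ((M - A) / √(n : ℝ)) : ℝ) : ℂ) * Complex.I) *
        (U s - F 0 * ((Real.exp (-(v * s ^ 2 / 2)) : ℝ) : ℂ)) := by
    have e2 : ∫ s : ℝ, Complex.exp (((s * ((M - A) / √(n : ℝ)) : ℝ) : ℂ) * Complex.I) *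
        (U s - F 0 * ((Real.exp (-(v * s ^ 2 / 2)) : ℝ) : ℂ)) =
        |c⁻¹| • ((Et m l n hs fun y => g (y - A)) : ℂ) -
          F 0 * ((√(2 * π / v) * Real.exp (-(((M - A) / √(n : ℝ)) ^ 2 / (2 * v))) : ℝ) : ℂ) := by
      rw [← h2, ← h3, ← integral_const_mul, ← integral_sub (hmod hUi) ((hmod hGi).const_mul _)]
      refine integral_congr_ae (Eventually.of_forall fun s => ?_)
      simp only
      ring
    rw [e2, hF0, abs_of_pos (by positivity), Complex.real_smul]
    have b1 : √(2 * π * n * v) = √(2 * π * v) * √(n : ℝ) := by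
      rw [← Real.sqrt_mul (by positivity)]; congr 1; ring
    have b2 : (√(2 * π * v) * (2 * π)⁻¹) * √(2 * π / v) = 1 := by
      have : √(2 * π * v) * √(2 * π / v) = 2 * π := by
        rw [← Real.sqrt_mul (by positivity), show 2 * π * v * (2 * π / v) = (2 * π) ^ 2 by field_simp,
          Real.sqrt_sq (by positivity)]
      rw [mul_right_comm, this]; field_simp
    have b3 : ((M - A) / √(n : ℝ)) ^ 2 / (2 * v) = (A - M) ^ 2 / (2 * n * v) := by
      rw [div_pow, hsq2]; field_simp; ring
    have b4 : (2 * π)⁻¹ * c⁻¹ = √(n : ℝ) := by rw [hc]; field_simp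
    rw [b3, b1, ← b4]
    have b2' := congrArg (fun r : ℝ => (r : ℂ)) b2
    push_cast at b2' ⊢
    linear_combination (Complex.exp (-((A - M) ^ 2 / (2 * n * v))) * ((∫ x, g x : ℝ) : ℂ)) * b2'
  have e5 : ‖√(2 * π * n * v) * (Et m l n hs fun y => g (y - A)) -
      Real.exp (-((A - M) ^ 2 / (2 * n * v))) * ∫ x, g x‖ₑ = ‖((√(2 * π * n * v) * (Et m l n hs fun y => g (y - A)) -
      Real.exp (-((A - M) ^ 2 / (2 * n * v))) * ∫ x, g x : ℝ) : ℂ)‖ₑ := by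
    rw [← ofReal_norm, ← ofReal_norm, Complex.norm_real]
  rw [e5, key, enorm_mul]
  refine mul_le_mul' (le_of_eq ?_) ((enorm_integral_le_lintegral_enorm _).trans (le_of_eq ?_))
  · rw [← ofReal_norm, Complex.norm_real, Real.norm_of_nonneg (by positivity)]
  · refine lintegral_congr fun s => ?_
    rw [← ofReal_norm, norm_mul, Complex.norm_exp_ofReal_mul_I, one_mul, ofReal_norm]

def dev (m l v : ℝ) (n : ℕ) (hs : ℕ → ℝ) (A : ℝ) (g : ℝ → ℝ) : ℝ :=
  √(2 * π * n * v) * (Et m l n hs fun y => g (y - A)) -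
      Real.exp (-((A - Mn m l n hs) ^ 2 / (2 * n * v))) * ∫ x, g x

lemma decay1 {C : ℝ} (hC : 0 < C) {y : ℝ} (hy : 0 ≤ y) : (1 + y) * Real.exp (-(C * y)) ≤ 1 + C⁻¹ := by
  have h1 := Real.add_one_le_exp (C * y)
  rw [Real.exp_neg, ← div_eq_mul_inv, div_le_iff₀ (Real.exp_pos _)]
  have h2 : (1 + C⁻¹) * (C * y + 1) ≤ (1 + C⁻¹) * Real.exp (C * y) := by gcongr
  have h3 : C⁻¹ * C = 1 := by field_simp
  have h4 : 0 < C⁻¹ := by positivity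
  nlinarith [mul_nonneg hC.le hy]

lemma decay2 {C : ℝ} (hC : 0 < C) {n : ℕ} (hn : 1 ≤ n) (s : ℝ) :
    (1 + s ^ 2) * Real.exp (-(C * (n * min 1 ((s / √(n : ℝ)) ^ 2)))) ≤ (1 + C⁻¹) * (1 + s ^ 2 / n) := by
  have hnpos : (0 : ℝ) < n := by exact_mod_cast hn
  rw [div_pow, Real.sq_sqrt hnpos.le]
  have hs := sq_nonneg s
  rcases le_total (s ^ 2) n with h | h
  · rw [min_eq_right ((div_le_one hnpos).2 h), mul_div_cancel₀ _ hnpos.ne']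
    refine (decay1 hC hs).trans (le_mul_of_one_le_right (by positivity) ?_)
    have : 0 ≤ s ^ 2 / n := by positivity
    linarith
  · rw [min_eq_left ((one_le_div hnpos).2 h), mul_one]
    have h1 := decay1 hC hnpos.le
    have h2 : 1 + s ^ 2 ≤ (1 + n) * (1 + s ^ 2 / n) := by
      have : s ^ 2 = n * (s ^ 2 / n) := by field_simp
      have h3 : 0 ≤ s ^ 2 / n := by positivity
      nlinarith
    calc (1 + s ^ 2) * Real.exp (-(C * n)) ≤ ((1 + n) * (1 + s ^ 2 / n)) * Real.exp (-(C * n)) := by gcongr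
      _ = ((1 + n) * Real.exp (-(C * n))) * (1 + s ^ 2 / n) := by ring
      _ ≤ _ := by gcongr

lemma llt_smooth {Ω : Type*} [MeasurableSpace Ω] {P : Measure Ω} [IsProbabilityMeasure P]
    {X : ℕ → Ω → ℝ} {μ : Measure ℝ}
    (hS : Setup P X μ) (hA : Assumption1 μ) {m : ℝ} (hm : m ∈ Set.Ioo (-1 : ℝ) 1) (l : ℝ)
    (A : ℕ → Ω → ℝ) (g : ℝ → ℝ) (hg : ContDiff ℝ ((⊤ : ℕ∞) : WithTop ℕ∞) g) (hc : HasCompactSupport g) :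
    Tendsto (fun n : ℕ => ∫⁻ ω, ‖dev m l (vv μ m l) n (fun i => X i ω) (A n ω) g‖ₑ ∂P) atTop (𝓝 0) := by
  obtain ⟨F, K, hF, hK0, hK, hF0, hinv⟩ := fourier_pkg g hg hc
  obtain ⟨C, hC, hdec⟩ := Zn_decay hS hA hm l
  have hv := vv_pos hA hm l
  have hpi := Real.pi_pos
  set v := vv μ m l with hvdef
  set W : ℕ → ℝ → Ω → ℂ := fun n s ω => F (s / (2 * π * √(n : ℝ))) * Zn m l X n (s / √(n : ℝ)) ω
      - F 0 * ((Real.exp (-(v * s ^ 2 / 2)) : ℝ) : ℂ) with hW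
  have hWm : ∀ n, Measurable (fun z : ℝ × Ω => W n z.1 z.2) := fun n => by
    have h1 : Measurable (fun z : ℝ × Ω => Zn m l X n (z.1 / √(n : ℝ)) z.2) :=
      (Zn_meas hS.meas hm l n).comp (by fun_prop : Measurable fun z : ℝ × Ω => (z.1 / √(n : ℝ), z.2))
    have h2 := hF.measurable
    rw [hW]
    fun_prop
  have hWi : ∀ n s, Integrable (W n s) P := fun n s =>
    ((Zn_int hS.meas hm l _ n).const_mul _).sub (integrable_const _)
  have hWV : ∀ n s, ∫⁻ ω, ‖W n s ω‖ₑ ∂P = ENNReal.ofReal (∫ ω, ‖W n s ω‖ ∂P) := fun n s =>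
    (ofReal_integral_norm_eq_lintegral_enorm (hWi n s)).symm
  -- dominated convergence
  have hlim : Tendsto (fun n : ℕ => ∫⁻ s : ℝ, ∫⁻ ω, ‖W n s ω‖ₑ ∂P) atTop (𝓝 (∫⁻ s : ℝ, 0)) := by
    refine tendsto_lintegral_filter_of_dominated_convergence
      (fun s => ENNReal.ofReal ((K * (4 * π ^ 2) * (1 + C⁻¹) + K * (1 + (v / 2)⁻¹)) * (1 + s ^ 2)⁻¹))
      (Eventually.of_forall fun n => ?_) ?_ ?_ ?_
    · exact Measurable.lintegral_prod_right' (f := fun z : ℝ × Ω => ‖W n z.1 z.2‖ₑ) (hWm n).enorm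
    · filter_upwards [eventually_ge_atTop 1] with n hn
      refine Eventually.of_forall fun s => ?_
      rw [hWV]
      refine ENNReal.ofReal_le_ofReal ?_
      have hnpos : (0 : ℝ) < n := by exact_mod_cast hn
      set a := F (s / (2 * π * √(n : ℝ))) with ha
      set c := Real.exp (-(v * s ^ 2 / 2)) with hcdef
      have h1 : ∫ ω, ‖W n s ω‖ ∂P ≤ ∫ ω, (‖a‖ * ‖Zn m l X n (s / √(n : ℝ)) ω‖ + ‖F 0‖ * c) ∂P := by
        refine integral_mono (hWi n s).norm (((Zn_int hS.meas hm l _ n).norm.const_mul _).add (integrable_const _)) fun ω => ?_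
        refine (norm_sub_le _ _).trans (le_of_eq ?_)
        rw [norm_mul, norm_mul, Complex.norm_real, Real.norm_of_nonneg (Real.exp_pos _).le]
      rw [integral_add ((Zn_int hS.meas hm l _ n).norm.const_mul _) (integrable_const _), integral_const_mul,
        integral_const] at h1
      simp only [probReal_univ, one_smul] at h1
      refine h1.trans ?_
      have h2 := hdec n (s / √(n : ℝ))
      have h3 := decay2 hC hn s
      have h4 : ‖a‖ ≤ K * (4 * π ^ 2) * (1 + s ^ 2 / n)⁻¹ := by
        refine (hK _).trans ?_
        rw [mul_assoc K]
        refine mul_le_mul_of_nonneg_left ?_ hK0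
        rw [div_pow, mul_pow, Real.sq_sqrt hnpos.le, ← div_eq_mul_inv, le_div_iff₀ (by positivity),
          inv_mul_le_iff₀ (by positivity)]
        have h5 : 1 ≤ (2 * π) ^ 2 := by nlinarith [Real.pi_gt_three]
        have h6 : s ^ 2 / ((2 * π) ^ 2 * n) * (4 * π ^ 2) = s ^ 2 / n := by field_simp; ring
        rw [add_mul, h6]
        nlinarith
      have h5 : ‖F 0‖ ≤ K := by simpa using hK 0
      have h6 := decay1 (C := v / 2) (by positivity) (sq_nonneg s)
      rw [← mul_div_right_comm] at h6
      rw [← div_eq_mul_inv, le_div_iff₀ (by positivity)]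
      have e1 : ‖a‖ * (∫ ω, ‖Zn m l X n (s / √(n : ℝ)) ω‖ ∂P) * (1 + s ^ 2) ≤ K * (4 * π ^ 2) * (1 + C⁻¹) := by
        calc ‖a‖ * (∫ ω, ‖Zn m l X n (s / √(n : ℝ)) ω‖ ∂P) * (1 + s ^ 2)
            ≤ (K * (4 * π ^ 2) * (1 + s ^ 2 / n)⁻¹) * Real.exp (-(C * (n * min 1 ((s / √(n : ℝ)) ^ 2)))) * (1 + s ^ 2) := by
              gcongr
          _ = (K * (4 * π ^ 2) * (1 + s ^ 2 / n)⁻¹) * ((1 + s ^ 2) * Real.exp (-(C * (n * min 1 ((s / √(n : ℝ)) ^ 2))))) := by ring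
          _ ≤ (K * (4 * π ^ 2) * (1 + s ^ 2 / n)⁻¹) * ((1 + C⁻¹) * (1 + s ^ 2 / n)) := by gcongr
          _ = _ := by
              have : (1 + s ^ 2 / n) ≠ 0 := by positivity
              field_simp
      have e2 : ‖F 0‖ * c * (1 + s ^ 2) ≤ K * (1 + (v / 2)⁻¹) := by
        calc ‖F 0‖ * c * (1 + s ^ 2) = ‖F 0‖ * ((1 + s ^ 2) * c) := by ring
          _ ≤ _ := by gcongr
      linarith
    · exact ((integrable_inv_one_add_sq.const_mul _).lintegral_lt_top).ne
    · refine Eventually.of_forall fun s => ?_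
      simp_rw [hWV]
      rw [← ENNReal.ofReal_zero]
      refine (ENNReal.continuous_ofReal.tendsto 0).comp ?_
      have hZ := Zn_L1 hS hA hm l s
      rw [← hvdef] at hZ
      set c := Real.exp (-(v * s ^ 2 / 2)) with hcdef
      have hFn : Tendsto (fun n : ℕ => F (s / (2 * π * √(n : ℝ)))) atTop (𝓝 (F 0)) := by
        refine (hF.tendsto 0).comp ?_
        refine Tendsto.div_atTop tendsto_const_nhds ?_
        exact Tendsto.const_mul_atTop (by positivity) (Real.tendsto_sqrt_atTop.comp tendsto_natCast_atTop_atTop)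
      have hb : Tendsto (fun n : ℕ => ‖F (s / (2 * π * √(n : ℝ)))‖ * (∫ ω, ‖Zn m l X n (s / √(n : ℝ)) ω - (c : ℂ)‖ ∂P)
          + ‖F (s / (2 * π * √(n : ℝ))) - F 0‖ * c) atTop (𝓝 0) := by
        have := (hFn.norm.mul hZ).add (((hFn.sub_const (F 0)).norm).mul_const c)
        simpa using this
      refine squeeze_zero (fun n => integral_nonneg fun _ => norm_nonneg _) (fun n => ?_) hb
      have hi : Integrable (fun ω => ‖Zn m l X n (s / √(n : ℝ)) ω - (c : ℂ)‖) P :=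
        ((Zn_int hS.meas hm l _ n).sub (integrable_const _)).norm
      have h1 : ∫ ω, ‖W n s ω‖ ∂P ≤ ∫ ω, (‖F (s / (2 * π * √(n : ℝ)))‖ * ‖Zn m l X n (s / √(n : ℝ)) ω - (c : ℂ)‖ +
           ‖F (s / (2 * π * √(n : ℝ))) - F 0‖ * c) ∂P := by
        refine integral_mono (hWi n s).norm ((hi.const_mul _).add (integrable_const _)) fun ω => ?_
        have : W n s ω = F (s / (2 * π * √(n : ℝ))) * (Zn m l X n (s / √(n : ℝ)) ω - (c : ℂ)) +
           (F (s / (2 * π * √(n : ℝ))) - F 0) * (c : ℂ) := by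
          simp only [hW]; ring
        simp only [this]
        refine (norm_add_le _ _).trans (le_of_eq ?_)
        rw [norm_mul, norm_mul, Complex.norm_real, Real.norm_of_nonneg (Real.exp_pos _).le]
      refine h1.trans (le_of_eq ?_)
      rw [integral_add (hi.const_mul _) (integrable_const _), integral_const_mul, integral_const]
      simp
  rw [lintegral_zero] at hlim
  have hlim2 := ENNReal.Tendsto.const_mul (a := ENNReal.ofReal (√(2 * π * v) * (2 * π)⁻¹)) hlim (Or.inr ENNReal.ofReal_ne_top)
  rw [mul_zero] at hlim2
  refine tendsto_of_tendsto_of_tendsto_of_le_of_le' tendsto_const_nhds hlim2 (Eventually.of_forall fun _ => zero_le) ?_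
  filter_upwards [eventually_ge_atTop 1] with n hn
  have h1 : ∀ ω, ‖dev m l v n (fun i => X i ω) (A n ω) g‖ₑ ≤ ENNReal.ofReal (√(2 * π * v) * (2 * π)⁻¹) * ∫⁻ s : ℝ, ‖W n s ω‖ₑ :=
    fun ω => by
      have := llt_bound hm l hn (fun i => X i ω) (A n ω) hv hF hK hF0 hinv
      simp only [hW]
      unfold Zn
      exact this
  refine (lintegral_mono h1).trans ?_
  have hm2 : Measurable (fun z : Ω × ℝ => ‖W n z.2 z.1‖ₑ) :=
    ((hWm n).comp measurable_swap).enorm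
  rw [lintegral_const_mul _ (Measurable.lintegral_prod_right' hm2)]
  refine le_of_eq ?_
  congr 1
  exact lintegral_lintegral_swap hm2.aemeasurable

lemma Tw_nonneg {m : ℝ} (hm : m ∈ Set.Ioo (-1 : ℝ) 1) (l : ℝ) (n : ℕ) (hs : ℕ → ℝ) (τ : Fin n → Bool) :
    0 ≤ Tw m l n hs τ := by
  unfold Tw
  refine Finset.prod_nonneg fun i _ => ?_
  split_ifs
  · exact (pp_pos hm _).le
  · exact (qq_pos hm _).le

lemma dev_approx {m : ℝ} (hm : m ∈ Set.Ioo (-1 : ℝ) 1) (l : ℝ) {v : ℝ} (hv : 0 < v) (n : ℕ) (hs : ℕ → ℝ) (A : ℝ)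
    {ψ g b : ℝ → ℝ} {ε : ℝ} (hε : 0 ≤ ε) (hb0 : ∀ x, 0 ≤ b x) (hψi : Integrable ψ) (hgi : Integrable g)
    (hbi : Integrable b) (h : ∀ x, |ψ x - g x| ≤ ε * b x) :
    |dev m l v n hs A ψ| ≤ ε * |dev m l v n hs A b| + 2 * ε * (∫ x, b x) + |dev m l v n hs A g| := by
  set R := Real.exp (-((A - Mn m l n hs) ^ 2 / (2 * n * v))) with hR
  have hR1 : R ≤ 1 := by
    rw [hR]; refine Real.exp_le_one_iff.2 (neg_nonpos.2 (by positivity))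
  have hR0 : 0 ≤ R := (Real.exp_pos _).le
  have hIb : 0 ≤ ∫ x, b x := integral_nonneg hb0
  have h1 : |√(2 * π * n * v) * (Et m l n hs fun y => ψ (y - A)) - √(2 * π * n * v) * (Et m l n hs fun y => g (y - A))| ≤
      ε * (√(2 * π * n * v) * (Et m l n hs fun y => b (y - A))) := by
    rw [← mul_sub, abs_mul, abs_of_nonneg (Real.sqrt_nonneg _), mul_left_comm]
    refine mul_le_mul_of_nonneg_left ?_ (Real.sqrt_nonneg _)
    unfold Et
    rw [← Finset.sum_sub_distrib, Finset.mul_sum]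
    refine (Finset.abs_sum_le_sum_abs _ _).trans (Finset.sum_le_sum fun τ _ => ?_)
    rw [← mul_sub, abs_mul, abs_of_nonneg (Tw_nonneg hm l n hs τ), mul_left_comm]
    exact mul_le_mul_of_nonneg_left (h _) (Tw_nonneg hm l n hs τ)
  have h2 : |(∫ x, ψ x) - ∫ x, g x| ≤ ε * ∫ x, b x := by
    rw [← integral_sub hψi hgi, ← integral_const_mul]
    exact (norm_integral_le_integral_norm _).trans
      (integral_mono (hψi.sub hgi).norm (hbi.const_mul _) fun x => h x)
  have h3 : √(2 * π * n * v) * (Et m l n hs fun y => b (y - A)) ≤ |dev m l v n hs A b| + ∫ x, b x := by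
    have := le_abs_self (dev m l v n hs A b)
    have h4 : √(2 * π * n * v) * (Et m l n hs fun y => b (y - A)) = dev m l v n hs A b + R * ∫ x, b x := by
      unfold dev; ring
    nlinarith
  have e : dev m l v n hs A ψ = (√(2 * π * n * v) * (Et m l n hs fun y => ψ (y - A)) - √(2 * π * n * v) * (Et m l n hs fun y => g (y - A)))
    + dev m l v n hs A g - R * ((∫ x, ψ x) - ∫ x, g x) := by unfold dev; ring
  have h5 : |R * ((∫ x, ψ x) - ∫ x, g x)| ≤ ε * ∫ x, b x := by
    rw [abs_mul, abs_of_nonneg hR0]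
    exact (mul_le_of_le_one_left (abs_nonneg _) hR1).trans h2
  rw [e]
  refine (abs_sub _ _).trans ?_
  have h6 := abs_add_le (√(2 * π * n * v) * (Et m l n hs fun y => ψ (y - A)) - √(2 * π * n * v) * (Et m l n hs fun y => g (y - A))) (dev m l v n hs A g)
  have h7 := mul_le_mul_of_nonneg_left h3 hε
  linarith

lemma Hn_meas {Ω : Type*} [MeasurableSpace Ω] {X : ℕ → Ω → ℝ} (hX : ∀ i, Measurable (X i)) (m : ℝ) (n : ℕ)
    (τ : Fin n → Bool) : Measurable fun ω => Hn m n (fun i => X i ω) τ := by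
  unfold Hn
  fun_prop

lemma Mn_meas {Ω : Type*} [MeasurableSpace Ω] {X : ℕ → Ω → ℝ} (hX : ∀ i, Measurable (X i)) {m : ℝ}
    (hm : m ∈ Set.Ioo (-1 : ℝ) 1) (l : ℝ) (n : ℕ) : Measurable fun ω => Mn m l n (fun i => X i ω) := by
  have h1 := (pp_cont hm).measurable
  have h2 := (qq_cont hm).measurable
  unfold Mn
  fun_prop

lemma Et_meas {Ω : Type*} [MeasurableSpace Ω] {X : ℕ → Ω → ℝ} (hX : ∀ i, Measurable (X i)) {m : ℝ}
    (hm : m ∈ Set.Ioo (-1 : ℝ) 1) (l : ℝ) (n : ℕ) {A : Ω → ℝ} (hA : Measurable A) {g : ℝ → ℝ} (hg : Measurable g) :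
    Measurable fun ω => Et m l n (fun i => X i ω) (fun y => g (y - A ω)) := by
  have h1 := (pp_cont hm).measurable
  have h2 := (qq_cont hm).measurable
  unfold Et
  refine Finset.measurable_sum _ fun τ _ => Measurable.mul ?_ ?_
  · unfold Tw
    refine Finset.measurable_prod _ fun i _ => ?_
    split_ifs <;> fun_prop
  · have h3 := Hn_meas hX m n τ
    exact hg.comp (h3.sub hA)

lemma dev_meas {Ω : Type*} [MeasurableSpace Ω] {X : ℕ → Ω → ℝ} (hX : ∀ i, Measurable (X i)) {m : ℝ}
    (hm : m ∈ Set.Ioo (-1 : ℝ) 1) (l v : ℝ) (n : ℕ) {A : Ω → ℝ} (hA : Measurable A) {g : ℝ → ℝ} (hg : Measurable g) :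
    Measurable fun ω => dev m l v n (fun i => X i ω) (A ω) g := by
  have h1 := Et_meas hX hm l n hA hg
  have h2 := Mn_meas hX hm l n
  unfold dev
  fun_prop

lemma llt_cc {Ω : Type*} [MeasurableSpace Ω] {P : Measure Ω} [IsProbabilityMeasure P]
    {X : ℕ → Ω → ℝ} {μ : Measure ℝ}
    (hS : Setup P X μ) (hA : Assumption1 μ) {m : ℝ} (hm : m ∈ Set.Ioo (-1 : ℝ) 1) (l : ℝ)
    (A : ℕ → Ω → ℝ) (hAm : ∀ n, Measurable (A n)) (ψ : ℝ → ℝ) (hψ : Continuous ψ) (hc : HasCompactSupport ψ) :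
    Tendsto (fun n : ℕ => ∫⁻ ω, ‖dev m l (vv μ m l) n (fun i => X i ω) (A n ω) ψ‖ₑ ∂P) atTop (𝓝 0) := by
  have hv := vv_pos hA hm l
  obtain ⟨r, hr, hsub⟩ := hc.isCompact.isBounded.subset_closedBall_lt 0 0
  set bb : ContDiffBump (0 : ℝ) := ⟨r, r + 1, hr, by linarith⟩ with hbb
  set b : ℝ → ℝ := fun x => bb x with hb
  have hbs : ContDiff ℝ ((⊤ : ℕ∞) : WithTop ℕ∞) b := bb.contDiff
  have hbc : HasCompactSupport b := bb.hasCompactSupport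
  have hb0 : ∀ x, 0 ≤ b x := fun x => bb.nonneg
  have hbi : Integrable b := hbs.continuous.integrable_of_hasCompactSupport hbc
  have hL := llt_smooth hS hA hm l A b hbs hbc
  rw [ENNReal.tendsto_nhds_zero]
  intro ε0 hε0
  have hIb : 0 ≤ ∫ x, b x := integral_nonneg hb0
  obtain ⟨e0, he0, he1⟩ : ∃ e0 : ℝ, 0 < e0 ∧ ENNReal.ofReal e0 ≤ ε0 := by
    refine ⟨(min ε0 1).toReal, ENNReal.toReal_pos (by simp [hε0.ne']) (by simp), ?_⟩
    rw [ENNReal.ofReal_toReal (by simp)]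
    exact min_le_left _ _
  set ε := e0 / (2 * (1 + ∫ x, b x)) with hεdef
  have hε : 0 < ε := by positivity
  obtain ⟨g, hgs, hgd, hgsupp⟩ := hψ.exists_contDiff_approx (⊤ : ℕ∞) (continuous_const (y := ε)) (fun _ => hε)
  have hgc : HasCompactSupport g := hc.mono hgsupp
  have hgL := llt_smooth hS hA hm l A g hgs hgc
  have hbd : ∀ x, |ψ x - g x| ≤ ε * b x := fun x => by
    by_cases hx : ψ x = 0
    · have : g x = 0 := by
        by_contra h0
        exact (hgsupp h0) hx
      rw [hx, this, sub_zero, abs_zero]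
      exact mul_nonneg hε.le (hb0 x)
    · have h1 : b x = 1 := bb.one_of_mem_closedBall (hsub (subset_tsupport ψ hx))
      rw [h1, mul_one]
      have := hgd x
      rw [dist_comm, Real.dist_eq] at this
      exact this.le
  have hψi : Integrable ψ := hψ.integrable_of_hasCompactSupport hc
  have hgi : Integrable g := hgs.continuous.integrable_of_hasCompactSupport hgc
  filter_upwards [(ENNReal.tendsto_nhds_zero.1 hL) 1 one_pos,
    (ENNReal.tendsto_nhds_zero.1 hgL) (ENNReal.ofReal ε) (by simpa using hε)] with n h1 h2
  refine le_trans ?_ he1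
  set v := vv μ m l
  have hmb := dev_meas hS.meas hm l v n (hAm n) hbs.continuous.measurable
  have hmg := dev_meas hS.meas hm l v n (hAm n) hgs.continuous.measurable
  calc ∫⁻ ω, ‖dev m l v n (fun i => X i ω) (A n ω) ψ‖ₑ ∂P
      ≤ ∫⁻ ω, (ENNReal.ofReal ε * ‖dev m l v n (fun i => X i ω) (A n ω) b‖ₑ + ENNReal.ofReal (2 * ε * ∫ x, b x) +
          ‖dev m l v n (fun i => X i ω) (A n ω) g‖ₑ) ∂P := by
        refine lintegral_mono fun ω => ?_
        have := dev_approx hm l hv n (fun i => X i ω) (A n ω) hε.le hb0 hψi hgi hbi hbd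
        simp only [Real.enorm_eq_ofReal_abs]
        rw [← ENNReal.ofReal_mul hε.le, ← ENNReal.ofReal_add (by positivity) (by positivity),
          ← ENNReal.ofReal_add (by positivity) (by positivity)]
        exact ENNReal.ofReal_le_ofReal this
    _ = ENNReal.ofReal ε * (∫⁻ ω, ‖dev m l v n (fun i => X i ω) (A n ω) b‖ₑ ∂P) + ENNReal.ofReal (2 * ε * ∫ x, b x) +
          ∫⁻ ω, ‖dev m l v n (fun i => X i ω) (A n ω) g‖ₑ ∂P := by
        rw [lintegral_add_right _ hmg.enorm, lintegral_add_right _ measurable_const, lintegral_const_mul _ hmb.enorm,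
          lintegral_const, measure_univ, mul_one]
    _ ≤ ENNReal.ofReal ε * 1 + ENNReal.ofReal (2 * ε * ∫ x, b x) + ENNReal.ofReal ε := by gcongr
    _ = ENNReal.ofReal e0 := by
        rw [mul_one, ← ENNReal.ofReal_add (by positivity) (by positivity),
          ← ENNReal.ofReal_add (by positivity) (by positivity)]
        congr 1
        rw [hεdef]
        field_simp
        ring

lemma U_int (n : ℕ) (Q c : (Fin n → Bool) → ℝ) (hQ0 : ∀ τ, 0 ≤ Q τ) (hQ1 : ∀ τ, Q τ ≤ 1) :
    ∫ u, Real.exp (-(∑ τ : Fin n → Bool, if u τ ≤ Q τ then c τ else 0)) ∂(Unif n) =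
      ∏ τ : Fin n → Bool, (1 - Q τ * (1 - Real.exp (-(c τ)))) := by
  have h1 : ∀ u : (Fin n → Bool) → ℝ, Real.exp (-(∑ τ : Fin n → Bool, if u τ ≤ Q τ then c τ else 0)) =
      ∏ τ : Fin n → Bool, (fun (τ : Fin n → Bool) (x : ℝ) => Real.exp (-(if x ≤ Q τ then c τ else 0))) τ (u τ) := fun u => by
    rw [← Finset.sum_neg_distrib, Real.exp_sum]
  rw [integral_congr_ae (Eventually.of_forall h1)]
  unfold Unif
  refine (integral_fintype_prod_eq_prod (𝕜 := ℝ) (E := fun _ : (Fin n → Bool) => ℝ)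
    (fun (τ : Fin n → Bool) (x : ℝ) => Real.exp (-(if x ≤ Q τ then c τ else 0)))).trans ?_
  refine Finset.prod_congr rfl fun τ _ => ?_
  have h2 : ∀ x : ℝ, Real.exp (-(if x ≤ Q τ then c τ else 0)) =
      1 + (Set.Iic (Q τ)).indicator (fun _ => Real.exp (-(c τ)) - 1) x := fun x => by
    by_cases hx : x ≤ Q τ
    · rw [if_pos hx, Set.indicator_of_mem (by exact hx)]; ring
    · rw [if_neg hx, Set.indicator_of_notMem (by exact hx)]; simp
  simp_rw [h2]
  rw [integral_add (integrable_const _) ((integrable_const _).indicator measurableSet_Iic), integral_const,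
    integral_indicator measurableSet_Iic, integral_const]
  have h3 : (volume.restrict (Set.Icc (0:ℝ) 1)).real Set.univ = 1 := by simp [Measure.real]
  have h4 : ((volume.restrict (Set.Icc (0:ℝ) 1)).restrict (Set.Iic (Q τ))).real Set.univ = Q τ := by
    have : Set.Iic (Q τ) ∩ Set.Icc 0 1 = Set.Icc 0 (Q τ) := by
      ext x; simp only [Set.mem_inter_iff, Set.mem_Iic, Set.mem_Icc]
      constructor
      · rintro ⟨a, b, _⟩; exact ⟨b, a⟩
      · rintro ⟨a, b⟩; exact ⟨b, a, b.trans (hQ1 τ)⟩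
    rw [Measure.restrict_restrict measurableSet_Iic, this]
    simp [Measure.real, hQ0 τ]
  rw [h3, h4]
  simp only [smul_eq_mul]
  ring

lemma prod_exp_close {ι : Type*} [Fintype ι] (x : ι → ℝ) {q : ℝ} (h0 : ∀ i, 0 ≤ x i) (hq : ∀ i, x i ≤ q) (hq0 : 0 ≤ q) (hq1 : q < 1) :
    |∏ i, (1 - x i) - Real.exp (-(∑ i, x i))| ≤ q / (1 - q) := by
  have hpos : 0 < 1 - q := by linarith
  have hS : 0 ≤ ∑ i, x i := Finset.sum_nonneg fun i _ => h0 i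
  have hu : ∏ i, (1 - x i) ≤ Real.exp (-(∑ i, x i)) := by
    rw [← Finset.sum_neg_distrib, Real.exp_sum]
    refine Finset.prod_le_prod (fun i _ => by linarith [hq i]) fun i _ => ?_
    linarith [Real.add_one_le_exp (-(x i))]
  have hl : Real.exp (-((∑ i, x i) / (1 - q))) ≤ ∏ i, (1 - x i) := by
    rw [Finset.sum_div, ← Finset.sum_neg_distrib, Real.exp_sum]
    refine Finset.prod_le_prod (fun i _ => (Real.exp_pos _).le) fun i _ => ?_
    have hp : 0 < 1 - x i := by linarith [hq i]
    have h1 := Real.add_one_le_exp (x i / (1 - q))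
    have h2 : x i / (1 - x i) ≤ x i / (1 - q) :=
      div_le_div_of_nonneg_left (h0 i) hpos (by linarith [hq i])
    have h3 : x i / (1 - x i) + 1 = (1 - x i)⁻¹ := by field_simp; ring
    rw [Real.exp_neg]
    refine inv_le_of_inv_le₀ hp ?_
    linarith
  set S := ∑ i, x i
  have h5 : Real.exp (-(S / (1 - q))) = Real.exp (-S) * Real.exp (-(S * (q / (1 - q)))) := by
    rw [← Real.exp_add]; congr 1; field_simp; ring
  have h6 := Real.add_one_le_exp (-(S * (q / (1 - q))))
  have h7 : S * Real.exp (-S) ≤ 1 := by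
    rw [Real.exp_neg, ← div_eq_mul_inv, div_le_one (Real.exp_pos _)]
    linarith [Real.add_one_le_exp S]
  have h8 : 0 ≤ q / (1 - q) := by positivity
  have h9 : Real.exp (-S) - Real.exp (-(S / (1 - q))) ≤ q / (1 - q) := by
    rw [h5]
    have := mul_le_mul_of_nonneg_left h6 (Real.exp_pos (-S)).le
    have h10 := mul_le_mul_of_nonneg_right h7 h8
    nlinarith
  rw [abs_le]; constructor <;> linarith

lemma Qw_bounds {m : ℝ} (hm : m ∈ Set.Ioo (-1 : ℝ) 1) (ρ : ℝ) (n : ℕ) (τ : Fin n → Bool) :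
    0 ≤ Qw m ρ n τ ∧ Qw m ρ n τ ≤ (Real.exp (-((1 - ρ) * (Real.log 2 - Real.log (1 + |m|))))) ^ n := by
  have hab : |m| < 1 := abs_lt.2 hm
  have hf : ∀ i : Fin n, 0 ≤ (1 + m * spin (τ i)) / 2 ∧ (1 + m * spin (τ i)) / 2 ≤ (1 + |m|) / 2 := fun i => by
    have := le_abs_self m
    have := neg_abs_le m
    unfold spin
    split_ifs <;> constructor <;> linarith
  unfold Qw
  refine ⟨mul_nonneg (Real.exp_pos _).le (Finset.prod_nonneg fun i _ => (hf i).1), ?_⟩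
  have h1 : ∏ i : Fin n, (1 + m * spin (τ i)) / 2 ≤ ((1 + |m|) / 2) ^ n := by
    have := Finset.prod_le_prod (s := Finset.univ) (fun i _ => (hf i).1) (fun i _ => (hf i).2)
    rwa [Finset.prod_const, Finset.card_univ, Fintype.card_fin] at this
  refine (mul_le_mul_of_nonneg_left h1 (Real.exp_pos _).le).trans (le_of_eq ?_)
  have h2 : (1 + |m|) / 2 = Real.exp (-(Real.log 2 - Real.log (1 + |m|))) := by
    rw [neg_sub, Real.exp_sub, Real.exp_log (by positivity), Real.exp_log (by norm_num)]
  rw [h2, ← Real.exp_nat_mul, ← Real.exp_nat_mul, ← Real.exp_add]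
  congr 1
  ring

lemma tilt {m : ℝ} (hm : m ∈ Set.Ioo (-1 : ℝ) 1) (ρ l : ℝ) (n : ℕ) (hs : ℕ → ℝ) (A : ℝ) (φ : ℝ → ℝ) :
    ∑ τ : Fin n → Bool, Qw m ρ n τ * φ (Hn m n hs τ - A) =
    Real.exp (n * (ρ * (Real.log 2 - Real.log (1 + |m|))) + (∑ i : Fin n, gfun m (l * hs i)) - l * A) *
      Et m l n hs (fun y => φ (y - A) * Real.exp (-(l * (y - A)))) := by
  unfold Et
  rw [Finset.mul_sum]
  refine Finset.sum_congr rfl fun τ _ => ?_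
  have h1 : ∀ i : Fin n, (1 + m * spin (τ i)) / 2 = (if τ i then pp m (l * hs i) else qq m (l * hs i)) *
      Real.exp (gfun m (l * hs i) - l * (hs i * (spin (τ i) - m))) := fun i => by
    rw [Real.exp_sub, exp_gfun hm]
    have hw := ww_pos hm (l * hs i)
    cases τ i
    · simp only [spin, Bool.false_eq_true, if_false]
      have h2 : qq m (l * hs i) * ww m (l * hs i) = (1 - m) / 2 * Real.exp (-(l * hs i * (1 + m))) := by
        unfold qq; field_simp
      rw [← mul_div_assoc, h2, show l * (hs i * (-1 - m)) = -(l * hs i * (1 + m)) by ring]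
      field_simp
      ring
    · simp only [spin, if_true]
      have h2 : pp m (l * hs i) * ww m (l * hs i) = (1 + m) / 2 * Real.exp (l * hs i * (1 - m)) := by
        unfold pp; field_simp
      rw [← mul_div_assoc, h2, show l * (hs i * (1 - m)) = l * hs i * (1 - m) by ring]
      field_simp
  have h3 : ∏ i : Fin n, (1 + m * spin (τ i)) / 2 = Tw m l n hs τ *
      Real.exp ((∑ i : Fin n, gfun m (l * hs i)) - l * Hn m n hs τ) := by
    rw [Finset.prod_congr rfl fun i _ => h1 i, Finset.prod_mul_distrib, Tw, ← Real.exp_sum, Finset.sum_sub_distrib,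
      ← Finset.mul_sum, Hn]
  unfold Qw
  rw [h3]
  have h4 : Real.exp (n * ρ * (Real.log 2 - Real.log (1 + |m|))) * Real.exp ((∑ i : Fin n, gfun m (l * hs i)) - l * Hn m n hs τ) =
    Real.exp (n * (ρ * (Real.log 2 - Real.log (1 + |m|))) + (∑ i : Fin n, gfun m (l * hs i)) - l * A) *
      Real.exp (-(l * (Hn m n hs τ - A))) := by
    rw [← Real.exp_add, ← Real.exp_add]; congr 1; ring
  linear_combination (Tw m l n hs τ * φ (Hn m n hs τ - A)) * h4

lemma id_int {μ : Measure ℝ} (hA : Assumption1 μ) : Integrable (fun x : ℝ => x) μ :=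
  hA.intAbs.mono (by fun_prop) (Eventually.of_forall fun x => by simp)

lemma gfun_int {μ : Measure ℝ} (hA : Assumption1 μ) {m : ℝ} (hm : m ∈ Set.Ioo (-1 : ℝ) 1) (l : ℝ) :
    Integrable (fun x => gfun m (l * x)) μ := by
  have := gfun_cont hm
  refine (hA.intAbs.const_mul (2 * |l|)).mono' (by fun_prop : Continuous fun x => gfun m (l * x)).aestronglyMeasurable
    (Eventually.of_forall fun x => ?_)
  refine (gfun_bound hm _).trans (le_of_eq ?_)
  rw [abs_mul]; ring

lemma gd_cont {m : ℝ} (hm : m ∈ Set.Ioo (-1 : ℝ) 1) (l : ℝ) :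
    Continuous (fun x => x * (pp m (l * x) - qq m (l * x) - m)) := by
  have := pp_cont hm
  have := qq_cont hm
  fun_prop

lemma gd_abs {m : ℝ} (hm : m ∈ Set.Ioo (-1 : ℝ) 1) (l x : ℝ) :
    |x * (pp m (l * x) - qq m (l * x) - m)| ≤ 2 * |x| := by
  rw [abs_mul, mul_comm]
  exact mul_le_mul_of_nonneg_right (gd_bound hm _) (abs_nonneg x)

lemma gd_int {μ : Measure ℝ} (hA : Assumption1 μ) {m : ℝ} (hm : m ∈ Set.Ioo (-1 : ℝ) 1) (l : ℝ) :
    Integrable (fun x => x * (pp m (l * x) - qq m (l * x) - m)) μ :=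
  (hA.intAbs.const_mul 2).mono' (gd_cont hm l).aestronglyMeasurable (Eventually.of_forall fun x => gd_abs hm l x)

lemma Gf_deriv {μ : Measure ℝ} (hA : Assumption1 μ) {m : ℝ} (hm : m ∈ Set.Ioo (-1 : ℝ) 1) (l : ℝ) :
    deriv (Gf μ m) l = ∫ x, x * (pp m (l * x) - qq m (l * x) - m) ∂μ := by
  have h := hasDerivAt_integral_of_dominated_loc_of_deriv_le (μ := μ) (𝕜 := ℝ) (x₀ := l) (s := Set.univ)
    (F := fun l x => gfun m (l * x)) (F' := fun l x => x * (pp m (l * x) - qq m (l * x) - m)) (bound := fun x => 2 * |x|)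
    univ_mem (Eventually.of_forall fun l => (gfun_int hA hm l).1) (gfun_int hA hm l) (gd_int hA hm l).1
    (Eventually.of_forall fun x l _ => gd_abs hm l x) (hA.intAbs.const_mul 2)
    (Eventually.of_forall fun x l _ => by
      have h1 := (gfun_deriv hm (l * x)).comp l ((hasDerivAt_id l).mul_const x)
      refine h1.congr_deriv ?_
      ring)
  exact h.2.deriv

lemma Gstar_eq {μ : Measure ℝ} (hA : Assumption1 μ) {m : ℝ} (hm : m ∈ Set.Ioo (-1 : ℝ) 1) (l : ℝ) {a : ℝ}
    (ha : deriv (Gf μ m) l = a) : Gstar μ m a = l * a - Gf μ m l := by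
  rw [Gf_deriv hA hm] at ha
  have key : ∀ lam : ℝ, lam * a - Gf μ m lam ≤ l * a - Gf μ m l := fun lam => by
    have h1 : ∫ x, (gfun m (l * x) + (lam - l) * (x * (pp m (l * x) - qq m (l * x) - m))) ∂μ ≤ ∫ x, gfun m (lam * x) ∂μ := by
      refine integral_mono ((gfun_int hA hm l).add ((gd_int hA hm l).const_mul _)) (gfun_int hA hm lam) fun x => ?_
      have := gfun_tangent hm (lam * x) (l * x)
      simp only
      linarith
    rw [integral_add (gfun_int hA hm l) ((gd_int hA hm l).const_mul _), integral_const_mul, ha] at h1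
    unfold Gf
    linarith
  exact le_antisymm (ciSup_le key) (le_ciSup (f := fun lam => lam * a - Gf μ m lam) ⟨_, by rintro _ ⟨y, rfl⟩; exact key y⟩ l)

def xi (m r l x : ℝ) : ℝ := (r + gfun m (l * x)) / l - x * (pp m (l * x) - qq m (l * x) - m)

lemma xi_cont {m : ℝ} (hm : m ∈ Set.Ioo (-1 : ℝ) 1) (r l : ℝ) : Continuous (xi m r l) := by
  have := gfun_cont hm
  have := gd_cont hm l
  unfold xi
  fun_prop

lemma xi_int {μ : Measure ℝ} (hA : Assumption1 μ) {m : ℝ} (hm : m ∈ Set.Ioo (-1 : ℝ) 1) {l : ℝ} (hl : 0 < l) {a r : ℝ}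
    (ha : deriv (Gf μ m) l = a) (hG : Gstar μ m a = r) : ∫ x, xi m r l x ∂μ = 0 := by
  have := hA.isProb
  rw [Gstar_eq hA hm l ha] at hG
  rw [Gf_deriv hA hm] at ha
  unfold xi
  have hi : Integrable (fun x => (r + gfun m (l * x)) / l) μ := ((integrable_const _).add (gfun_int hA hm l)).div_const l
  rw [integral_sub hi (gd_int hA hm l), integral_div,
    integral_add (integrable_const _) (gfun_int hA hm l), ha, integral_const]
  simp only [probReal_univ, one_smul]
  rw [← hG, Gf]
  field_simp
  ring

lemma xi_L2 {μ : Measure ℝ} (hA : Assumption1 μ) {m : ℝ} (hm : m ∈ Set.Ioo (-1 : ℝ) 1) {l : ℝ} (hl : 0 < l) (r : ℝ) :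
    MemLp (xi m r l) 2 μ := by
  have := hA.isProb
  have h1 : MemLp (fun x : ℝ => x) 2 μ := (memLp_two_iff_integrable_sq (by fun_prop)).2 hA.intSq
  have h1a : MemLp (fun x : ℝ => |x|) 2 μ := h1.abs
  have h1b : MemLp (fun x : ℝ => 4 * |x|) 2 μ := h1a.const_mul 4
  have h1c : MemLp (fun _ : ℝ => |r| / l) 2 μ := memLp_const _
  have h2 : MemLp (fun x : ℝ => |r| / l + 4 * |x|) 2 μ := h1c.add h1b
  clear h1 h1a h1b h1c
  refine h2.mono (xi_cont hm r l).aestronglyMeasurable (Eventually.of_forall fun x => ?_)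
  rw [Real.norm_eq_abs, Real.norm_of_nonneg (by positivity)]
  unfold xi
  have h3 := gd_abs hm l x
  have h4 := gfun_bound hm (l * x)
  rw [abs_mul, abs_of_pos hl] at h4
  have h5 : |(r + gfun m (l * x)) / l| ≤ |r| / l + 2 * |x| := by
    rw [abs_div, abs_of_pos hl, div_le_iff₀ hl, add_mul, div_mul_cancel₀ _ hl.ne']
    refine (abs_add_le _ _).trans ?_
    linarith
  refine (abs_sub _ _).trans ?_
  linarith

lemma tight {Ω : Type*} [MeasurableSpace Ω] {P : Measure Ω} [IsProbabilityMeasure P]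
    {X : ℕ → Ω → ℝ} {μ : Measure ℝ}
    (hS : Setup P X μ) (hA : Assumption1 μ) {m : ℝ} (hm : m ∈ Set.Ioo (-1 : ℝ) 1) {l : ℝ} (hl : 0 < l) {a r : ℝ}
    (ha : deriv (Gf μ m) l = a) (hG : Gstar μ m a = r) {n : ℕ} (hn : 1 ≤ n) {B : ℝ} (hB : 0 < B) :
    P {ω | B * √(n : ℝ) ≤ |∑ i : Fin n, xi m r l (X i ω)|} ≤ ENNReal.ofReal (Var[xi m r l; μ] / B ^ 2) := by
  have hnpos : (0 : ℝ) < n := by exact_mod_cast hn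
  have hsq : 0 < √(n : ℝ) := Real.sqrt_pos.2 hnpos
  have hc := xi_cont hm r l
  have hL : ∀ i : Fin n, MemLp (fun ω => xi m r l (X i ω)) 2 P := fun i => by
    have h1 := xi_L2 hA hm hl r
    rw [← hS.dist i] at h1
    exact h1.comp_of_map (hS.meas i).aemeasurable
  have hE : ∀ i : Fin n, ∫ ω, xi m r l (X i ω) ∂P = 0 := fun i => by
    rw [← xi_int hA hm hl ha hG, ← hS.dist i, integral_map (hS.meas i).aemeasurable]
    exact hc.aestronglyMeasurable
  have hV : ∀ i : Fin n, Var[fun ω => xi m r l (X i ω); P] = Var[xi m r l; μ] := fun i => by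
    rw [← hS.dist i, variance_map hc.aemeasurable (hS.meas i).aemeasurable]
    rfl
  have hi := (hS.indep.comp (fun _ => xi m r l) (fun _ => hc.measurable))
  have hvar := IndepFun.variance_sum (μ := P) (X := fun (i : Fin n) ω => xi m r l (X i ω)) (s := Finset.univ) (fun i _ => hL i)
    (fun i _ j _ hij => hi.indepFun (fun h => hij (Fin.ext h)))
  have hLs : MemLp (∑ i : Fin n, fun ω => xi m r l (X i ω)) 2 P := memLp_finsetSum' _ fun i _ => hL i
  have hch := meas_ge_le_variance_div_sq hLs (c := B * √(n : ℝ)) (by positivity)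
  rw [hvar] at hch
  have hE2 : ∫ ω, (∑ i : Fin n, fun ω => xi m r l (X i ω)) ω ∂P = 0 := by
    simp only [Finset.sum_apply]
    rw [integral_finsetSum _ fun i _ => (hL i).integrable (by norm_num)]
    exact Finset.sum_eq_zero fun i _ => hE i
  rw [hE2] at hch
  simp only [hV, sub_zero, Finset.sum_apply, Finset.sum_const, Finset.card_univ, Fintype.card_fin, nsmul_eq_mul] at hch
  rwa [mul_pow, Real.sq_sqrt hnpos.le, mul_comm (n : ℝ), mul_div_mul_right _ _ hnpos.ne'] at hch

def Dn (m l v r : ℝ) (n : ℕ) (hs : ℕ → ℝ) : ℝ :=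
  (∑ i : Fin n, xi m r l (hs i)) - Real.log (2 * π * n * v) / (2 * l)
def An (m l v r : ℝ) (n : ℕ) (hs : ℕ → ℝ) : ℝ :=
  Mn m l n hs + Dn m l v r n hs - Dn m l v r n hs ^ 2 / (2 * n * v * l)

lemma An_meas {m : ℝ} (hm : m ∈ Set.Ioo (-1 : ℝ) 1) (l v r : ℝ) (n : ℕ) : Measurable (An m l v r n) := by
  have h1 := Mn_meas (Ω := ℕ → ℝ) (X := fun i hs => hs i) (fun i => measurable_pi_apply i) hm l n
  have h2 := (xi_cont hm r l).measurable
  have h3 : Measurable (Dn m l v r n) := by unfold Dn; fun_prop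
  unfold An
  fun_prop

lemma Dn_eq (m : ℝ) {l : ℝ} (hl : 0 < l) (v r : ℝ) (n : ℕ) (hs : ℕ → ℝ) :
    n * r + (∑ i : Fin n, gfun m (l * hs i)) = l * (Mn m l n hs + Dn m l v r n hs) + Real.log (2 * π * n * v) / 2 := by
  unfold Dn Mn xi
  rw [Finset.sum_sub_distrib, ← Finset.sum_div, Finset.sum_add_distrib]
  simp only [Finset.sum_const, Finset.card_univ, Fintype.card_fin, nsmul_eq_mul]
  field_simp
  ring

lemma S_eq {m : ℝ} (hm : m ∈ Set.Ioo (-1 : ℝ) 1) (ρ : ℝ) {l v : ℝ} (hl : 0 < l) (hv : 0 < v) {n : ℕ} (hn : 1 ≤ n) (hs : ℕ → ℝ)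
    (φ : ℝ → ℝ) {r : ℝ} (hr : r = ρ * (Real.log 2 - Real.log (1 + |m|))) :
    ∑ τ : Fin n → Bool, Qw m ρ n τ * φ (Hn m n hs τ - An m l v r n hs) =
      Real.exp (Dn m l v r n hs ^ 2 / (2 * n * v)) * (dev m l v n hs (An m l v r n hs) (fun x => φ x * Real.exp (-(l * x))) +
        Real.exp (-((An m l v r n hs - Mn m l n hs) ^ 2 / (2 * n * v))) * ∫ x, φ x * Real.exp (-(l * x))) := by
  have hnpos : (0 : ℝ) < n := by exact_mod_cast hn
  have hpi := Real.pi_pos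
  rw [tilt hm ρ l, ← hr, Dn_eq m hl v r]
  have h1 : Real.exp (l * (Mn m l n hs + Dn m l v r n hs) + Real.log (2 * π * n * v) / 2 - l * An m l v r n hs) =
      Real.exp (Dn m l v r n hs ^ 2 / (2 * n * v)) * √(2 * π * n * v) := by
    have h2 : √(2 * π * n * v) = Real.exp (Real.log (2 * π * n * v) / 2) := by
      rw [Real.exp_half, Real.exp_log (by positivity)]
    rw [h2, ← Real.exp_add]
    congr 1
    unfold An
    field_simp
    ring
  rw [h1]
  unfold dev
  ring

lemma abs_exp_sub_one_le' (x : ℝ) : |Real.exp x - 1| ≤ Real.exp |x| - 1 := by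
  rcases le_total 0 x with h | h
  · rw [abs_of_nonneg h, abs_of_nonneg]
    linarith [Real.add_one_le_exp x]
  · rw [abs_of_nonpos h, abs_of_nonpos (by linarith [Real.exp_le_one_iff.2 h])]
    have h1 := Real.exp_pos x
    have h2 : Real.exp x * Real.exp (-x) = 1 := by rw [← Real.exp_add]; simp
    nlinarith [sq_nonneg (Real.exp x - 1), Real.exp_pos (-x)]

lemma abs_exp_neg_sub {a b : ℝ} (ha : 0 ≤ a) (hb : 0 ≤ b) : |Real.exp (-a) - Real.exp (-b)| ≤ |a - b| := by
  wlog h : a ≤ b generalizing a b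
  · rw [abs_sub_comm, abs_sub_comm a b]; exact this hb ha (le_of_not_ge h)
  rw [abs_of_nonneg (by linarith [Real.exp_le_exp.2 (neg_le_neg h)]), abs_of_nonpos (by linarith)]
  have h1 : Real.exp (-b) = Real.exp (-a) * Real.exp (-(b - a)) := by rw [← Real.exp_add]; congr 1; ring
  have h2 := Real.add_one_le_exp (-(b - a))
  have h3 : Real.exp (-a) ≤ 1 := Real.exp_le_one_iff.2 (by linarith)
  have h4 := Real.exp_pos (-a)
  rw [h1]
  nlinarith

lemma KR {l v B : ℝ} (hl : 0 < l) (hv : 0 < v) (hB : 0 ≤ B) {n : ℕ} (hn : 1 ≤ n) {D M : ℝ} (hD : |D| ≤ B * √(n : ℝ)) :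
    Real.exp (D ^ 2 / (2 * n * v)) ≤ Real.exp (B ^ 2 / (2 * v)) ∧
    |Real.exp (D ^ 2 / (2 * n * v)) * Real.exp (-((M + D - D ^ 2 / (2 * n * v * l) - M) ^ 2 / (2 * n * v))) - 1| ≤
      Real.exp ((2 * B * (B ^ 2 / (2 * v * l)) + (B ^ 2 / (2 * v * l)) ^ 2) / (2 * v) / √(n : ℝ)) - 1 := by
  have hnpos : (0 : ℝ) < n := by exact_mod_cast hn
  have hn1 : (1 : ℝ) ≤ n := by exact_mod_cast hn
  have hsq1 : 1 ≤ √(n : ℝ) := Real.one_le_sqrt.2 hn1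
  have hsq2 : √(n : ℝ) ^ 2 = n := Real.sq_sqrt hnpos.le
  set s := √(n : ℝ) with hs
  have hspos : 0 < s := by linarith
  have hD2 : D ^ 2 ≤ B ^ 2 * n := by
    rw [← sq_abs, ← hsq2, ← mul_pow]; gcongr
  constructor
  · refine Real.exp_le_exp.2 ?_
    rw [div_le_div_iff₀ (by positivity) (by positivity)]
    nlinarith
  · rw [← Real.exp_add]
    refine (abs_exp_sub_one_le' _).trans ?_
    gcongr
    set e := B ^ 2 / (2 * v * l) with he
    have he0 : 0 ≤ e := by positivity
    set E := D ^ 2 / (2 * n * v * l) with hE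
    have hE0 : 0 ≤ E := by positivity
    have hEe : E ≤ e := by
      rw [hE, he, div_le_div_iff₀ (by positivity) (by positivity)]
      have : 0 < v * l := by positivity
      nlinarith
    have h1 : D ^ 2 / (2 * n * v) + -((M + D - E - M) ^ 2 / (2 * n * v)) = (2 * D * E - E ^ 2) / (2 * n * v) := by
      field_simp; ring
    rw [h1, abs_div, abs_of_pos (by positivity : 0 < 2 * n * v), div_div, ← hsq2]
    have h2 : |2 * D * E - E ^ 2| ≤ 2 * (B * s) * e + e ^ 2 := by
      refine (abs_sub _ _).trans ?_
      rw [abs_mul, abs_mul, abs_of_nonneg hE0, abs_of_nonneg (sq_nonneg E), abs_of_pos (by norm_num : (0:ℝ) < 2)]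
      gcongr
    rw [div_le_div_iff₀ (by positivity) (by positivity)]
    have h3 : 2 * (B * s) * e + e ^ 2 ≤ s * (2 * B * e + e ^ 2) := by nlinarith [sq_nonneg e]
    have h4 : |2 * D * E - E ^ 2| ≤ s * (2 * B * e + e ^ 2) := h2.trans h3
    calc |2 * D * E - E ^ 2| * (2 * v * s) ≤ (s * (2 * B * e + e ^ 2)) * (2 * v * s) := by gcongr
      _ = _ := by ring

lemma log_small {l c : ℝ} (hl : 0 < l) (hc : 0 < c) : ∀ᶠ n : ℕ in atTop, |Real.log (c * n) / (2 * l)| ≤ √(n : ℝ) := by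
  have h1 := (isLittleO_log_rpow_atTop (r := 1 / 2) (by norm_num)).comp_tendsto
    (Tendsto.const_mul_atTop hc (tendsto_natCast_atTop_atTop (R := ℝ)))
  have h2 := h1.bound (c := 2 * l / √c) (by positivity)
  filter_upwards [h2] with n hn
  simp only [Function.comp, Real.norm_eq_abs] at hn
  rw [← Real.sqrt_eq_rpow, abs_of_nonneg (Real.sqrt_nonneg _), Real.sqrt_mul hc.le] at hn
  rw [abs_div, abs_of_pos (by positivity : 0 < 2 * l), div_le_iff₀ (by positivity)]
  refine hn.trans (le_of_eq ?_)
  have := Real.sqrt_pos.2 hc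
  field_simp

lemma main_lim {Ω : Type*} [MeasurableSpace Ω] {P : Measure Ω} [IsProbabilityMeasure P]
    {X : ℕ → Ω → ℝ} {μ : Measure ℝ}
    (hS : Setup P X μ) (hA : Assumption1 μ) {m ρ : ℝ} (hm : m ∈ Set.Ioo (-1 : ℝ) 1) (hρ : ρ ∈ Set.Ioo (0 : ℝ) 1)
    {l : ℝ} (hl : 0 < l) {a r v : ℝ}
    (ha : deriv (Gf μ m) l = a) (hG : Gstar μ m a = r) (hr : r = ρ * (Real.log 2 - Real.log (1 + |m|)))
    (hvdef : v = vv μ m l)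
    (f : ℝ → ℝ) (hf : Continuous f) (hfc : HasCompactSupport f) (hf0 : ∀ x, 0 ≤ f x) :
    Tendsto (fun n => ∫ ω, ∏ τ : Fin n → Bool, (1 - Qw m ρ n τ *
        (1 - Real.exp (-(f (Hn m n (fun i => X i ω) τ - An m l v r n (fun i => X i ω)))))) ∂P) atTop
      (𝓝 (Real.exp (-(∫ x : ℝ, (1 - Real.exp (-(f x))) * Real.exp (-(l * x)))))) := by
  have hv : 0 < v := by rw [hvdef]; exact vv_pos hA hm l
  have hpi := Real.pi_pos
  set φ : ℝ → ℝ := fun x => 1 - Real.exp (-(f x)) with hφ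
  have hφ0 : ∀ x, 0 ≤ φ x := fun x => by
    have := Real.exp_le_one_iff.2 (neg_nonpos.2 (hf0 x)); simp only [hφ]; linarith
  have hφ1 : ∀ x, φ x ≤ 1 := fun x => by
    have := Real.exp_pos (-(f x)); simp only [hφ]; linarith
  have hφc : Continuous φ := by rw [hφ]; fun_prop
  set ψ : ℝ → ℝ := fun x => φ x * Real.exp (-(l * x)) with hψ
  have hψc : Continuous ψ := by rw [hψ]; fun_prop
  have hψs : HasCompactSupport ψ := by
    refine hfc.mono fun x hx h0 => hx ?_
    simp only [hψ, hφ, h0]; simp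
  set I := ∫ x : ℝ, ψ x with hI
  have hI0 : 0 ≤ I := integral_nonneg fun x => mul_nonneg (hφ0 x) (Real.exp_pos _).le
  set A : ℕ → Ω → ℝ := fun n ω => An m l v r n (fun i => X i ω) with hAd
  have hXm : Measurable (fun ω => (fun i => X i ω : ℕ → ℝ)) := measurable_pi_lambda _ hS.meas
  have hAm : ∀ n, Measurable (A n) := fun n => (An_meas hm l v r n).comp hXm
  have hL := llt_cc hS hA hm l A hAm ψ hψc hψs
  rw [← hvdef] at hL
  set q0 := Real.exp (-((1 - ρ) * (Real.log 2 - Real.log (1 + |m|)))) with hq0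
  have hq0pos : 0 < q0 := Real.exp_pos _
  have hq01 : q0 < 1 := by
    rw [hq0, Real.exp_lt_one_iff]
    have h1 : |m| < 1 := abs_lt.2 hm
    have h2 : Real.log (1 + |m|) < Real.log 2 := Real.log_lt_log (by positivity) (by linarith)
    have : 0 < (1 - ρ) * (Real.log 2 - Real.log (1 + |m|)) := mul_pos (by linarith [hρ.2]) (by linarith)
    linarith
  set Φ : ℕ → Ω → ℝ := fun n ω => ∏ τ : Fin n → Bool, (1 - Qw m ρ n τ * φ (Hn m n (fun i => X i ω) τ - A n ω)) with hΦ
  have hΦm : ∀ n, Measurable (Φ n) := fun n => by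
    have h1 := hφc.measurable
    have h2 := hAm n
    have h3 := fun τ => Hn_meas hS.meas m n τ
    simp only [hΦ]
    fun_prop
  have hx : ∀ n ω (τ : Fin n → Bool), 0 ≤ Qw m ρ n τ * φ (Hn m n (fun i => X i ω) τ - A n ω) ∧
      Qw m ρ n τ * φ (Hn m n (fun i => X i ω) τ - A n ω) ≤ q0 ^ n := fun n ω τ => by
    have h1 := Qw_bounds hm ρ n τ
    exact ⟨mul_nonneg h1.1 (hφ0 _), (mul_le_of_le_one_right h1.1 (hφ1 _)).trans h1.2⟩
  have hq1 : ∀ n : ℕ, q0 ^ n ≤ 1 := fun n => pow_le_one₀ hq0pos.le hq01.le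
  have hΦ01 : ∀ n ω, 0 ≤ Φ n ω ∧ Φ n ω ≤ 1 := fun n ω => by
    refine ⟨Finset.prod_nonneg fun τ _ => ?_, Finset.prod_le_one (fun τ _ => ?_) fun τ _ => ?_⟩ <;>
    linarith [hx n ω τ, hq1 n, (hx n ω τ).1, (hx n ω τ).2]
  have hΦi : ∀ n, Integrable (Φ n) P := fun n =>
    Integrable.of_bound (C := 1) (hΦm n).aestronglyMeasurable (Eventually.of_forall fun ω => by
      rw [Real.norm_of_nonneg (hΦ01 n ω).1]; exact (hΦ01 n ω).2)
  change Tendsto (fun n => ∫ ω, Φ n ω ∂P) atTop (𝓝 (Real.exp (-I)))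
  have hc1 : Real.exp (-I) ≤ 1 := Real.exp_le_one_iff.2 (by linarith)
  have hc0 := Real.exp_pos (-I)
  set V := Var[xi m r l; μ] with hV
  have hV0 : 0 ≤ V := variance_nonneg _ _
  rw [tendsto_iff_edist_tendsto_0, ENNReal.tendsto_nhds_zero]
  intro ε0 hε0
  obtain ⟨e0, he0, he1⟩ : ∃ e0 : ℝ, 0 < e0 ∧ ENNReal.ofReal e0 ≤ ε0 := by
    refine ⟨(min ε0 1).toReal, ENNReal.toReal_pos (by simp [hε0.ne']) (by simp), ?_⟩
    rw [ENNReal.ofReal_toReal (by simp)]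
    exact min_le_left _ _
  obtain ⟨B, hB, hBV⟩ : ∃ B : ℝ, 0 < B ∧ V / B ^ 2 ≤ e0 / 3 := by
    refine ⟨√(3 * (V + 1) / e0), Real.sqrt_pos.2 (by positivity), ?_⟩
    rw [Real.sq_sqrt (by positivity), div_div_eq_mul_div, div_le_div_iff₀ (by positivity) (by norm_num)]
    nlinarith
  set κ := (2 * (B + 1) * ((B + 1) ^ 2 / (2 * v * l)) + ((B + 1) ^ 2 / (2 * v * l)) ^ 2) / (2 * v) with hκ
  set η : ℕ → ℝ := fun n => q0 ^ n / (1 - q0 ^ n) + (Real.exp (κ / √(n : ℝ)) - 1) * I with hη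
  have hηl : Tendsto η atTop (𝓝 0) := by
    have h1 : Tendsto (fun n : ℕ => q0 ^ n) atTop (𝓝 0) := tendsto_pow_atTop_nhds_zero_of_lt_one hq0pos.le hq01
    have h2 : Tendsto (fun n : ℕ => κ / √(n : ℝ)) atTop (𝓝 0) :=
      Tendsto.div_atTop tendsto_const_nhds (Real.tendsto_sqrt_atTop.comp tendsto_natCast_atTop_atTop)
    have h3 := (h1.div (tendsto_const_nhds (x := (1:ℝ)) |>.sub h1) (by norm_num)).add
      ((((Real.continuous_exp.tendsto 0).comp h2).sub_const 1).mul_const I)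
    simpa using h3
  set K := Real.exp ((B + 1) ^ 2 / (2 * v)) with hK
  have hKL := ENNReal.Tendsto.const_mul (a := ENNReal.ofReal K) hL (Or.inr ENNReal.ofReal_ne_top)
  rw [mul_zero] at hKL
  filter_upwards [eventually_ge_atTop 1, log_small (c := 2 * π * v) hl (by positivity),
    hηl.eventually (gt_mem_nhds (by positivity : 0 < e0 / 3)),
    (ENNReal.tendsto_nhds_zero.1 hKL) (ENNReal.ofReal (e0 / 3)) (by simpa using he0)] with n hn hlog hηn hLn
  refine le_trans ?_ he1
  set bad : Set Ω := {ω | B * √(n : ℝ) ≤ |∑ i : Fin n, xi m r l (X i ω)|} with hbad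
  have hbadm : MeasurableSet bad := by
    have h2 := (xi_cont hm r l).measurable
    have h3 := hS.meas
    exact measurableSet_le measurable_const (by fun_prop)
  have hPbad := tight hS hA hm hl ha hG hn hB
  have hηn0 : 0 ≤ η n := by
    simp only [hη]
    have h1 : q0 ^ n < 1 := pow_lt_one₀ hq0pos.le hq01 (by omega)
    have h2 : 0 ≤ κ / √(n : ℝ) := by positivity
    have h3 := Real.add_one_le_exp (κ / √(n : ℝ))
    have h4 : 0 ≤ Real.exp (κ / √(n : ℝ)) - 1 := by linarith
    have h5 : 0 < 1 - q0 ^ n := by linarith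
    positivity
  have hpt : ∀ ω, ‖Φ n ω - Real.exp (-I)‖ₑ ≤ bad.indicator (fun _ => (1 : ℝ≥0∞)) ω + ENNReal.ofReal (η n) +
      ENNReal.ofReal K * ‖dev m l v n (fun i => X i ω) (A n ω) ψ‖ₑ := fun ω => by
    by_cases hω : ω ∈ bad
    · rw [Set.indicator_of_mem hω, add_assoc]
      refine le_trans ?_ le_self_add
      rw [Real.enorm_eq_ofReal_abs, ← ENNReal.ofReal_one]
      refine ENNReal.ofReal_le_ofReal ?_
      have := hΦ01 n ω
      rw [abs_le]; constructor <;> linarith [this.1, this.2]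
    · rw [Set.indicator_of_notMem hω, zero_add]
      simp only [Real.enorm_eq_ofReal_abs]
      rw [← ENNReal.ofReal_mul (Real.exp_pos _).le, ← ENNReal.ofReal_add hηn0 (mul_nonneg (Real.exp_pos _).le (abs_nonneg _))]
      refine ENNReal.ofReal_le_ofReal ?_
      set hs : ℕ → ℝ := fun i => X i ω with hhs
      set D := Dn m l v r n hs with hD
      have hDb : |D| ≤ (B + 1) * √(n : ℝ) := by
        have h1 : |∑ i : Fin n, xi m r l (X i ω)| < B * √(n : ℝ) := not_le.1 hω
        rw [hD, Dn]
        refine (abs_sub _ _).trans ?_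
        rw [show 2 * π * n * v = 2 * π * v * n by ring]
        linarith
      obtain ⟨k1, k2⟩ := KR (M := Mn m l n hs) hl hv (by positivity : 0 ≤ B + 1) hn hDb
      have hSe := S_eq hm ρ hl hv hn hs φ hr
      have hcl := prod_exp_close (fun τ : Fin n → Bool => Qw m ρ n τ * φ (Hn m n hs τ - A n ω)) (q := q0 ^ n)
        (fun τ => (hx n ω τ).1) (fun τ => (hx n ω τ).2) (by positivity) (pow_lt_one₀ hq0pos.le hq01 (by omega))
      have hS0 : 0 ≤ ∑ τ : Fin n → Bool, Qw m ρ n τ * φ (Hn m n hs τ - A n ω) :=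
        Finset.sum_nonneg fun τ _ => (hx n ω τ).1
      have hee := abs_exp_neg_sub hS0 hI0
      set S := ∑ τ : Fin n → Bool, Qw m ρ n τ * φ (Hn m n hs τ - A n ω) with hSd
      have hSI : S - I = Real.exp (D ^ 2 / (2 * n * v)) * dev m l v n hs (A n ω) ψ +
          (Real.exp (D ^ 2 / (2 * n * v)) * Real.exp (-((Mn m l n hs + D - D ^ 2 / (2 * n * v * l) - Mn m l n hs) ^ 2 / (2 * n * v))) - 1) * I := by
        have : S = Real.exp (D ^ 2 / (2 * n * v)) * (dev m l v n hs (A n ω) ψ +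
          Real.exp (-((Mn m l n hs + D - D ^ 2 / (2 * n * v * l) - Mn m l n hs) ^ 2 / (2 * n * v))) * I) := hSe
        rw [this]; ring
      have hSIb : |S - I| ≤ K * |dev m l v n hs (A n ω) ψ| + (Real.exp (κ / √(n : ℝ)) - 1) * I := by
        rw [hSI]
        refine (abs_add_le _ _).trans ?_
        rw [abs_mul, abs_mul, abs_of_pos (Real.exp_pos _), abs_of_nonneg hI0]
        gcongr
      have : |Φ n ω - Real.exp (-I)| ≤ |Φ n ω - Real.exp (-S)| + |Real.exp (-S) - Real.exp (-I)| := abs_sub_le _ _ _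
      simp only [hη]
      refine this.trans ?_
      have hcl' : |Φ n ω - Real.exp (-S)| ≤ q0 ^ n / (1 - q0 ^ n) := hcl
      linarith
  have hdm := dev_meas hS.meas hm l v n (hAm n) hψc.measurable
  calc edist (∫ ω, Φ n ω ∂P) (Real.exp (-I)) = ‖∫ ω, (Φ n ω - Real.exp (-I)) ∂P‖ₑ := by
        rw [integral_sub (hΦi n) (integrable_const _), integral_const, edist_eq_enorm_sub]
        simp
    _ ≤ ∫⁻ ω, ‖Φ n ω - Real.exp (-I)‖ₑ ∂P := enorm_integral_le_lintegral_enorm _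
    _ ≤ ∫⁻ ω, (bad.indicator (fun _ => (1 : ℝ≥0∞)) ω + ENNReal.ofReal (η n) +
      ENNReal.ofReal K * ‖dev m l v n (fun i => X i ω) (A n ω) ψ‖ₑ) ∂P := lintegral_mono hpt
    _ = P bad + ENNReal.ofReal (η n) + ENNReal.ofReal K * ∫⁻ ω, ‖dev m l v n (fun i => X i ω) (A n ω) ψ‖ₑ ∂P := by
        rw [lintegral_add_right _ (hdm.enorm.const_mul _), lintegral_add_right _ measurable_const,
          lintegral_const_mul _ hdm.enorm, lintegral_const, measure_univ, mul_one, lintegral_indicator_const hbadm, one_mul]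
    _ ≤ ENNReal.ofReal (e0 / 3) + ENNReal.ofReal (e0 / 3) + ENNReal.ofReal (e0 / 3) := by
        gcongr
        exact hPbad.trans (ENNReal.ofReal_le_ofReal hBV)
    _ = ENNReal.ofReal e0 := by
        rw [← ENNReal.ofReal_add (by positivity) (by positivity), ← ENNReal.ofReal_add (by positivity) (by positivity)]
        congr 1
        ring

/-- REM universality: with `G*(ã) = ρ(log 2 − log(1+|m|))`, `G'(λ̃) = ã`,
there is an `h`-measurable centering `A_n` such that the Laplace functionals of the
thinned point process `𝐇_n` of the energies `H_n(h,σ) − A_n(h)` converge to the Laplace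
functional of a Poisson point process with intensity `e^{−λ̃x}dx`. -/
theorem stmt0 {Ω : Type*} [MeasurableSpace Ω] (P : Measure Ω) [IsProbabilityMeasure P]
    (X : ℕ → Ω → ℝ) (hXmeas : ∀ i, Measurable (X i))
    (hXindep : iIndepFun X P)
    (μ : Measure ℝ) (hXdist : ∀ i, Measure.map (X i) P = μ)
    (hAss : Assumption1 μ) (m ρ : ℝ) (hm : m ∈ Set.Ioo (-1 : ℝ) 1)
    (hρ : ρ ∈ Set.Ioo (0 : ℝ) 1)
    (atil ltil : ℝ) (hatil : atil ∈ Set.Ioo 0 (sigmaBar μ m)) (hltil : 0 < ltil)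
    (hGstar : Gstar μ m atil = ρ * (Real.log 2 - Real.log (1 + |m|)))
    (hGderiv : deriv (Gf μ m) ltil = atil) :
    ∃ A : ℕ → (ℕ → ℝ) → ℝ, (∀ n, Measurable (A n)) ∧
      ∀ f : ℝ → ℝ, Continuous f → HasCompactSupport f → (∀ x, 0 ≤ f x) →
        Tendsto (fun n =>
            ∫ ω, (∫ u, Real.exp (-(∑ τ : Fin n → Bool,
                if u τ ≤ Qw m ρ n τ then
                  f (Hn m n (fun i => X i ω) τ - A n (fun i => X i ω))
                else 0)) ∂(Unif n)) ∂P)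
          atTop
          (nhds (Real.exp (-(∫ x : ℝ,
            (1 - Real.exp (-(f x))) * Real.exp (-(ltil * x)))))) := by
  have hS : Setup P X μ := ⟨hXmeas, hXindep, hXdist⟩
  refine ⟨An m ltil (vv μ m ltil) (ρ * (Real.log 2 - Real.log (1 + |m|))), fun n => An_meas hm _ _ _ n,
    fun f hf hfc hf0 => ?_⟩
  refine (main_lim hS hAss hm hρ hltil hGderiv hGstar rfl rfl f hf hfc hf0).congr fun n => ?_
  refine integral_congr_ae (Eventually.of_forall fun ω => ?_)
  simp only
  have hab : |m| < 1 := abs_lt.2 hm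
  have h2 : Real.log (1 + |m|) < Real.log 2 := Real.log_lt_log (by positivity) (by linarith)
  rw [U_int n (Qw m ρ n) _ (fun τ => (Qw_bounds hm ρ n τ).1) fun τ => (Qw_bounds hm ρ n τ).2.trans
    (pow_le_one₀ (Real.exp_pos _).le (Real.exp_le_one_iff.2 (neg_nonpos.2
      (mul_nonneg (by linarith [hρ.2]) (by linarith)))))]
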